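/- Assume the Riemann Hypothesis. Then p_{n+1} − p_n ≪ p_n^{1/2} (log p_n)², i.e. there is an absolute constant C with p_{n+1} − p_n ≤ C p_n^{1/2} (log p_n)² for all n ≥ 1, where p_n denotes the n-th prime number. -/

import Mathlib

open Filter Real

noncomputable section

open Set MeasureTheory Topology

/-!
Under the Riemann hypothesis, `F = log (16 s² / ((s - 1) ζ(s)))` is holomorphic with positive real
part on `Re s > 1/2`. Positivity is all that is needed about the zeros: it bounds `|F'|` by a
multiple of `Re F / (Re s - 1/2)` (Borel–Carathéodory), and Poisson's inequality bounds the integral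
of `Re F` against `(η⁻² + t²)⁻¹` along `Re s = a` by `π η Re F(a + 1/η) ≪ η log (1/η)`.

Since `F' = 2/s - 1/(s - 1) - ζ'/ζ`, Mellin inversion with a tent of half-width `η` in `log n` turns
`∫ F'(s) xˢ V(s) ds` into `∑ Λ(n) V(n/x)` minus its main term, which is of order `x η²`. Moving the
line of integration to `a = 1/2 + 1/log x` bounds this difference by `O(η √x log² x)`. If no prime
lies in `(x e^{-η}, x e^η)`, the sum over prime powers is only `O(η √x)`, so `η ≪ log² x / √x`.
-/

/-! ### Holomorphic functions with positive real part on a half-plane -/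

/-- The open half-plane `Re s > c`, the domain of the functions with positive real part below. -/
def rightHalfPlane (c : ℝ) : Set ℂ := {s | c < s.re}

lemma isOpen_rightHalfPlane (c : ℝ) : IsOpen (rightHalfPlane c) :=
  isOpen_lt continuous_const Complex.continuous_re

lemma isSimplyConnected_rightHalfPlane (c : ℝ) : IsSimplyConnected (rightHalfPlane c) := by
  have hconvex : Convex ℝ (rightHalfPlane c) := convex_halfSpace_re_gt _
  have hne : (rightHalfPlane c).Nonempty := ⟨(c + 1 : ℝ), by simp [rightHalfPlane]⟩
  have : ContractibleSpace (rightHalfPlane c) := hconvex.contractibleSpace hne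
  change SimplyConnectedSpace (rightHalfPlane c)
  infer_instance

lemma ball_subset_rightHalfPlane {c : ℝ} {s : ℂ} :
    Metric.ball s (s.re - c) ⊆ rightHalfPlane c := by
  intro z hz
  rw [Metric.mem_ball, dist_eq_norm] at hz
  have hre := (abs_le.1 (Complex.abs_re_le_norm (z - s))).1
  rw [Complex.sub_re] at hre
  change c < z.re
  linarith

lemma exists_differentiableOn_exp_eq {U : Set ℂ} (hU : IsSimplyConnected U) (hUo : IsOpen U)
    {g : ℂ → ℂ} (hg : DifferentiableOn ℂ g U) (hg₀ : ∀ s ∈ U, g s ≠ 0) :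
    ∃ F : ℂ → ℂ, DifferentiableOn ℂ F U ∧ ∀ s ∈ U, Complex.exp (F s) = g s := by
  obtain ⟨F, hFc, hF⟩ := Complex.exists_continuousOn_eqOn_exp_comp hU hUo hg.continuousOn
    (fun ⟨s, hs, h⟩ => hg₀ s hs h)
  replace hF : ∀ s ∈ U, Complex.exp (F s) = g s := fun s hs => hF hs
  refine ⟨F, fun z hz => DifferentiableAt.differentiableWithinAt ?_, hF⟩
  have hUz : U ∈ 𝓝 z := hUo.mem_nhds hz
  have hclose : ∀ᶠ w in 𝓝 z, dist (F w) (F z) < 1 :=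
    (hFc.continuousAt hUz).eventually (Metric.ball_mem_nhds _ one_pos)
  have hlocal : F =ᶠ[𝓝 z] fun w => F z + Complex.log (g w / g z) := by
    filter_upwards [hclose, hUz] with w hw hwU
    rw [dist_eq_norm] at hw
    have him := abs_le.1 (Complex.abs_im_le_norm (F w - F z))
    rw [← hF w hwU, ← hF z hz, ← Complex.exp_sub,
      Complex.log_exp (by linarith [pi_gt_three]) (by linarith [pi_gt_three])]
    ring
  refine DifferentiableAt.congr_of_eventuallyEq ?_ hlocal
  refine (differentiableAt_const _).add (((hg.differentiableAt hUz).div_const _).clog ?_)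
  simp [div_self (hg₀ z hz)]

-- Borel–Carathéodory applied to `F c - F`, whose real part is below `Re F c`.
lemma norm_sub_le_of_re_pos {F : ℂ → ℂ} {c z : ℂ} {R : ℝ}
    (hF : DifferentiableOn ℂ F (Metric.ball c R)) (hpos : ∀ w ∈ Metric.ball c R, 0 < (F w).re)
    (hz : z ∈ Metric.ball c R) :
    ‖F z - F c‖ ≤ 2 * (F c).re * ‖z - c‖ / (R - ‖z - c‖) := by
  have hR : 0 < R := Metric.pos_of_mem_ball hz
  have hmaps : MapsTo (fun w => c + w) (Metric.ball 0 R) (Metric.ball c R) := fun w hw => by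
    simpa using hw
  have hBC := Complex.borelCaratheodory_zero (f := fun w => F c - F (c + w)) (z := z - c)
    (hpos c (Metric.mem_ball_self hR)) ((hF.comp (by fun_prop) hmaps).const_sub _)
    (fun w hw => by simpa using (hpos _ (hmaps hw)).le) hR
    (by simpa [dist_eq_norm] using hz) (by simp)
  simpa [norm_sub_rev] using hBC

section PositiveRealPart

variable {F : ℂ → ℂ} {c : ℝ}

lemma norm_deriv_le_of_re_pos (hF : DifferentiableOn ℂ F (rightHalfPlane c))
    (hpos : ∀ s ∈ rightHalfPlane c, 0 < (F s).re) {s : ℂ} (hs : s ∈ rightHalfPlane c) :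
    ‖deriv F s‖ ≤ 4 * (F s).re / (s.re - c) := by
  set R := s.re - c
  have hR₀ : 0 < R := sub_pos.2 hs
  have hball : Metric.ball s R ⊆ rightHalfPlane c := ball_subset_rightHalfPlane
  have hdiff : DiffContOnCl ℂ (fun z => F z - F s) (Metric.ball s (R / 2)) := by
    refine DifferentiableOn.diffContOnCl (((hF.mono hball).sub_const _).mono ?_)
    exact Metric.closure_ball_subset_closedBall.trans (Metric.closedBall_subset_ball (by linarith))
  have hsphere : ∀ z ∈ Metric.sphere s (R / 2), ‖F z - F s‖ ≤ 2 * (F s).re := fun z hz => by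
    have hz' : ‖z - s‖ = R / 2 := by simpa [dist_eq_norm] using hz
    refine (norm_sub_le_of_re_pos (hF.mono hball) (fun w hw => hpos w (hball hw)) (z := z)
      (by rw [Metric.mem_ball, dist_eq_norm]; linarith)).trans_eq ?_
    rw [hz']; field_simp; norm_num
  have hCauchy := Complex.norm_deriv_le_of_forall_mem_sphere_norm_le (half_pos hR₀) hdiff hsphere
  rw [deriv_sub_const] at hCauchy
  exact hCauchy.trans_eq (by field_simp; ring)

lemma re_le_of_re_pos_of_im_eq (hF : DifferentiableOn ℂ F (rightHalfPlane c))
    (hpos : ∀ s ∈ rightHalfPlane c, 0 < (F s).re) {s w : ℂ} (hs : s ∈ rightHalfPlane c)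
    (hre : s.re ≤ w.re) (him : s.im = w.im) :
    (F s).re ≤ (1 + 2 * (w.re - s.re) / (s.re - c)) * (F w).re := by
  have hball : Metric.ball w (w.re - c) ⊆ rightHalfPlane c := ball_subset_rightHalfPlane
  have hs' : c < s.re := hs
  have hnorm : ‖s - w‖ = w.re - s.re := by
    rw [Complex.norm_eq_sqrt_sq_add_sq, Complex.sub_re, Complex.sub_im, him, sub_self,
      zero_pow two_ne_zero, add_zero, sqrt_sq_eq_abs, abs_of_nonpos (by linarith), neg_sub]
  have hBC := norm_sub_le_of_re_pos (hF.mono hball) (fun z hz => hpos z (hball hz)) (z := s)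
    (by rw [Metric.mem_ball, dist_eq_norm, hnorm]; linarith)
  have hsub := (Complex.re_le_norm (F s - F w)).trans hBC
  rw [hnorm, Complex.sub_re, show w.re - c - (w.re - s.re) = s.re - c by ring] at hsub
  calc (F s).re ≤ (F w).re + 2 * (F w).re * (w.re - s.re) / (s.re - c) := by linarith
    _ = (1 + 2 * (w.re - s.re) / (s.re - c)) * (F w).re := by ring

end PositiveRealPart

/-! ### Integrals along vertical lines -/

lemma norm_integral_vertical_sub_le {G : ℂ → ℂ} {a b T M : ℝ} (hab : a ≤ b)
    (hGc : ContinuousOn G (Complex.re ⁻¹' Icc a b))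
    (hGd : DifferentiableOn ℂ G (Complex.re ⁻¹' Ioo a b))
    (hM : ∀ s : ℂ, s.re ∈ Icc a b → |s.im| = |T| → ‖G s‖ ≤ M) :
    ‖(∫ t in (-T)..T, G (b + t * Complex.I)) - ∫ t in (-T)..T, G (a + t * Complex.I)‖
      ≤ 2 * M * (b - a) := by
  have hrect := Complex.integral_boundary_rect_eq_zero_of_continuousOn_of_differentiableOn G
    (a - T * Complex.I) (b + T * Complex.I)
    (hGc.mono fun s hs => by simpa [uIcc_of_le hab] using hs.1)
    (hGd.mono fun s hs => by simpa [hab] using hs.1)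
  have hside : ∀ τ : ℝ, |τ| = |T| → ‖∫ x in a..b, G (x + τ * Complex.I)‖ ≤ M * (b - a) := by
    intro τ hτ
    refine (intervalIntegral.norm_integral_le_of_norm_le_const (C := M) fun x hx => ?_).trans_eq
      (by rw [abs_of_nonneg (sub_nonneg.2 hab)])
    rw [uIoc_of_le hab] at hx
    exact hM _ (by simpa using ⟨hx.1.le, hx.2⟩) (by simpa using hτ)
  have htop := hside T rfl
  have hbot := hside (-T) (abs_neg T)
  simp only [Complex.sub_re, Complex.ofReal_re, Complex.mul_re, Complex.I_re, mul_zero,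
    Complex.ofReal_im, Complex.I_im, mul_one, sub_self, sub_zero, Complex.add_re, add_zero,
    Complex.sub_im, Complex.mul_im, zero_sub, Complex.add_im, zero_add, Complex.ofReal_neg,
    smul_eq_mul] at hrect hbot
  calc _ = ‖Complex.I * ((∫ t in (-T)..T, G (b + t * Complex.I)) -
        ∫ t in (-T)..T, G (a + t * Complex.I))‖ := by simp
    _ = ‖(∫ x in a..b, G (x + T * Complex.I)) - ∫ x in a..b, G (x + -T * Complex.I)‖ := by
        congr 1; linear_combination hrect
    _ ≤ M * (b - a) + M * (b - a) := (norm_sub_le _ _).trans (add_le_add htop hbot)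
    _ = 2 * M * (b - a) := by ring

lemma verticalIntegrable_of_norm_le {G : ℂ → ℂ} {φ : ℝ → ℝ} {σ : ℝ}
    (hG : Continuous fun t : ℝ => G (σ + t * Complex.I)) (hφ : Integrable φ)
    (hle : ∀ t : ℝ, ‖G (σ + t * Complex.I)‖ ≤ φ t) : Complex.VerticalIntegrable G σ :=
  hφ.mono' hG.aestronglyMeasurable (Eventually.of_forall hle)

lemma integral_vertical_eq {G : ℂ → ℂ} {φ : ℝ → ℝ} {a b : ℝ} (hab : a ≤ b)
    (hGc : ContinuousOn G (Complex.re ⁻¹' Icc a b))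
    (hGd : DifferentiableOn ℂ G (Complex.re ⁻¹' Ioo a b))
    (hφ : Integrable φ) (hφ₀ : Tendsto φ (cocompact ℝ) (𝓝 0))
    (hle : ∀ s : ℂ, s.re ∈ Icc a b → ‖G s‖ ≤ φ s.im) :
    ∫ t : ℝ, G (a + t * Complex.I) = ∫ t : ℝ, G (b + t * Complex.I) := by
  have hint : ∀ σ ∈ Icc a b, Complex.VerticalIntegrable G σ := fun σ hσ =>
    verticalIntegrable_of_norm_le (hGc.comp_continuous (by fun_prop) fun t => by simpa using hσ) hφ
      fun t => by simpa using hle (σ + t * Complex.I) (by simpa using hσ)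
  have hlim : ∀ σ ∈ Icc a b, Tendsto (fun T : ℝ => ∫ t in (-T)..T, G (σ + t * Complex.I)) atTop
      (𝓝 (∫ t : ℝ, G (σ + t * Complex.I))) := fun σ hσ =>
    intervalIntegral_tendsto_integral (hint σ hσ) tendsto_neg_atTop_atBot tendsto_id
  have hsides : Tendsto (fun T : ℝ => 2 * max (φ T) (φ (-T)) * (b - a)) atTop (𝓝 0) := by
    have h₁ := hφ₀.mono_left atTop_le_cocompact
    have h₂ := (hφ₀.mono_left atBot_le_cocompact).comp tendsto_neg_atTop_atBot
    simpa using ((h₁.max h₂).const_mul 2).mul_const (b - a)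
  have hdiff := squeeze_zero_norm (fun T => norm_integral_vertical_sub_le (T := T) hab hGc hGd
    fun s hs hT => (hle s hs).trans <| by
      rcases abs_eq_abs.1 hT with h | h <;> rw [h] <;> simp) hsides
  exact (sub_eq_zero.1 (tendsto_nhds_unique
    ((hlim b ⟨hab, le_rfl⟩).sub (hlim a ⟨le_rfl, hab⟩)) hdiff)).symm

lemma integrable_inv_sq_add_sq {y : ℝ} (hy : y ≠ 0) :
    Integrable fun t : ℝ => (y ^ 2 + t ^ 2)⁻¹ := by
  refine ((integrable_inv_one_add_sq.comp_div hy).const_mul (y ^ 2)⁻¹).congr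
    (Eventually.of_forall fun t => ?_)
  simp only
  field_simp

lemma integral_univ_inv_sq_add_sq {y : ℝ} (hy : 0 < y) : ∫ t : ℝ, (y ^ 2 + t ^ 2)⁻¹ = π / y := by
  calc ∫ t : ℝ, (y ^ 2 + t ^ 2)⁻¹ = ∫ t : ℝ, (y ^ 2)⁻¹ * (1 + (t / y) ^ 2)⁻¹ := by
        congr 1 with t; field_simp
    _ = π / y := by
        rw [integral_const_mul, Measure.integral_comp_div (fun t : ℝ => (1 + t ^ 2)⁻¹) y,
          integral_univ_inv_one_add_sq, abs_of_pos hy, smul_eq_mul]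
        field_simp

lemma tendsto_inv_sq_add_sq_cocompact (y : ℝ) :
    Tendsto (fun t : ℝ => (y ^ 2 + t ^ 2)⁻¹) (cocompact ℝ) (𝓝 0) := by
  refine tendsto_inv_atTop_zero.comp (tendsto_atTop_add_const_left _ _ ?_)
  simpa only [Function.comp_def, Real.norm_eq_abs, sq_abs] using
    (tendsto_pow_atTop two_ne_zero).comp (tendsto_norm_cocompact_atTop (E := ℝ))

-- The line of integration may be moved off to `Re s = ∞`.
lemma integral_vertical_eq_zero {G : ℂ → ℂ} {a y K : ℝ} (hy : 0 < y)
    (hGc : ContinuousOn G (Complex.re ⁻¹' Ici a)) (hGd : DifferentiableOn ℂ G (rightHalfPlane a))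
    (hle : ∀ s : ℂ, a ≤ s.re → ‖G s‖ ≤ K * ((s.re - a + y) ^ 2 + s.im ^ 2)⁻¹) :
    ∫ t : ℝ, G (a + t * Complex.I) = 0 := by
  have hK : 0 ≤ K := by
    have h := (norm_nonneg _).trans (hle a (by simp))
    simp only [Complex.ofReal_re, sub_self, zero_add, Complex.ofReal_im] at h
    exact nonneg_of_mul_nonneg_left h (by positivity)
  have hshift : ∀ b, a ≤ b → ∫ t : ℝ, G (a + t * Complex.I) = ∫ t : ℝ, G (b + t * Complex.I) := by
    refine fun b hab => integral_vertical_eq hab (hGc.mono fun s hs => hs.1)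
      (hGd.mono fun s hs => hs.1) ((integrable_inv_sq_add_sq hy.ne').const_mul K)
      (by simpa using (tendsto_inv_sq_add_sq_cocompact y).const_mul K) fun s hs => ?_
    refine (hle s hs.1).trans ?_
    gcongr
    linarith [hs.1]
  have hbound : ∀ᶠ b : ℝ in atTop,
      ‖∫ t : ℝ, G (a + t * Complex.I)‖ ≤ K * (π / (b - a + y)) := by
    filter_upwards [eventually_ge_atTop a] with b hab
    have hb : 0 < b - a + y := by linarith
    rw [hshift b hab, ← integral_univ_inv_sq_add_sq hb, ← integral_const_mul]
    refine norm_integral_le_of_norm_le ((integrable_inv_sq_add_sq hb.ne').const_mul K)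
      (Eventually.of_forall fun t => ?_)
    simpa using hle (b + t * Complex.I) (by simpa using hab)
  have hlim : Tendsto (fun b : ℝ => K * (π / (b - a + y))) atTop (𝓝 0) := by
    have htop : Tendsto (fun b : ℝ => b - a + y) atTop atTop :=
      tendsto_atTop_add_const_right _ _ (tendsto_atTop_add_const_right _ _ tendsto_id)
    simpa using (htop.const_div_atTop π).const_mul K
  exact norm_le_zero_iff.1 (ge_of_tendsto hlim hbound)

/-! ### Poisson's inequality in a half-plane -/

lemma norm_dslope_le_of_norm_le {H : ℂ → ℂ} {M y : ℝ} {p p' s : ℂ} (hy : 0 < y)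
    (hH : DifferentiableOn ℂ H (Metric.ball p y)) (hM : ∀ z ∈ Metric.ball p y, ‖H z‖ ≤ M)
    (hMs : ‖H s‖ ≤ M) (hp' : ‖p - p'‖ = 2 * y) (hs : s ≠ p') :
    ‖dslope H p s‖ ≤ 6 * M / ‖s - p'‖ := by
  have hM₀ : 0 ≤ M := (norm_nonneg _).trans hMs
  have hsp' : 0 < ‖s - p'‖ := norm_pos_iff.2 (sub_ne_zero.2 hs)
  have htriangle : ‖s - p'‖ ≤ ‖s - p‖ + 2 * y := hp' ▸ norm_sub_le_norm_sub_add_norm_sub s p p'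
  have hpM : ‖H p‖ ≤ M := hM p (Metric.mem_ball_self hy)
  have hdiff : ∀ z, ‖H z‖ ≤ M → ‖H z - H p‖ ≤ 2 * M := fun z hz => by
    linarith [norm_sub_le (H z) (H p)]
  rcases lt_or_ge ‖s - p‖ y with hnear | hfar
  · have hSchwarz := Complex.norm_dslope_le_div_of_mapsTo_ball hH (R₂ := 2 * M)
      (fun z hz => by simpa [dist_eq_norm] using hdiff z (hM z hz))
      (z := s) (by simpa [dist_eq_norm] using hnear)
    refine hSchwarz.trans ((div_le_div_iff₀ hy hsp').2 ?_)
    nlinarith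
  · have hsp : 0 < ‖s - p‖ := hy.trans_le hfar
    rw [dslope_of_ne _ (sub_ne_zero.1 (norm_pos_iff.1 hsp)), slope_def_field, norm_div,
      div_le_div_iff₀ hsp hsp']
    nlinarith [hdiff s hMs, norm_nonneg (H s - H p)]

section Poisson

variable {c a y : ℝ}

lemma integral_dslope_div_eq_zero {H : ℂ → ℂ} {M : ℝ} (hH : DifferentiableOn ℂ H (rightHalfPlane c))
    (hM : ∀ s ∈ rightHalfPlane c, ‖H s‖ ≤ M) (ha : c < a) (hy : 0 < y) :
    Complex.VerticalIntegrable (fun s => dslope H (a + y) s / (s - (a - y))) a ∧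
      ∫ t : ℝ, dslope H (a + y) (a + t * Complex.I) / (a + t * Complex.I - (a - y)) = 0 := by
  set p : ℂ := a + y with hp
  set p' : ℂ := a - y with hp'
  set G : ℂ → ℂ := fun s => dslope H p s / (s - p') with hG
  have hpc : rightHalfPlane c ∈ 𝓝 p := (isOpen_rightHalfPlane c).mem_nhds <| by
    change c < p.re; simp only [hp, Complex.add_re, Complex.ofReal_re]; linarith
  have hball : Metric.ball p y ⊆ rightHalfPlane c :=
    (Metric.ball_subset_ball (by simpa [hp, add_sub_right_comm] using ha.le)).trans
      ball_subset_rightHalfPlane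
  have hne : ∀ s : ℂ, a ≤ s.re → s ≠ p' := fun s hs h => by
    rw [h, hp', Complex.sub_re, Complex.ofReal_re, Complex.ofReal_re] at hs; linarith
  have hGd : ∀ s : ℂ, a ≤ s.re → DifferentiableAt ℂ G s := fun s hs =>
    (((Complex.differentiableOn_dslope hpc).2 hH).differentiableAt
      ((isOpen_rightHalfPlane c).mem_nhds (ha.trans_le hs))).div (by fun_prop)
      (sub_ne_zero.2 (hne s hs))
  have hGc : ContinuousOn G (Complex.re ⁻¹' Ici a) := fun s hs =>
    (hGd s hs).continuousAt.continuousWithinAt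
  have hGle : ∀ s : ℂ, a ≤ s.re → ‖G s‖ ≤ 6 * M * ((s.re - a + y) ^ 2 + s.im ^ 2)⁻¹ := by
    intro s hs
    have hdslope := norm_dslope_le_of_norm_le hy (hH.mono hball) (fun z hz => hM z (hball hz))
      (hM s (ha.trans_le hs)) (p' := p') (by simp [hp, hp', ← two_mul, abs_of_pos hy]) (hne s hs)
    calc ‖G s‖ ≤ 6 * M / ‖s - p'‖ / ‖s - p'‖ := by rw [hG, norm_div]; gcongr
      _ = 6 * M * ((s.re - a + y) ^ 2 + s.im ^ 2)⁻¹ := by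
        rw [div_div, ← sq, Complex.sq_norm, Complex.normSq_apply, div_eq_mul_inv]
        simp only [hp', Complex.sub_re, Complex.sub_im, Complex.ofReal_re, Complex.ofReal_im]
        ring
  refine ⟨verticalIntegrable_of_norm_le (hGc.comp_continuous (by fun_prop) fun t => by simp)
    ((integrable_inv_sq_add_sq hy.ne').const_mul (6 * M)) fun t => ?_,
    integral_vertical_eq_zero hy hGc
      (fun s hs => (hGd s (le_of_lt hs)).differentiableWithinAt) hGle⟩
  simpa using hGle (a + t * Complex.I) (by simp)

-- The Poisson kernel has poles at `a + y` and at its mirror image `a - y`; subtracting `H (a + y)`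
-- removes the one on the right.
lemma integral_poisson_of_bounded {H : ℂ → ℂ} {M : ℝ} (hH : DifferentiableOn ℂ H (rightHalfPlane c))
    (hM : ∀ s ∈ rightHalfPlane c, ‖H s‖ ≤ M) (ha : c < a) (hy : 0 < y) :
    Integrable (fun t : ℝ => H (a + t * Complex.I) * ((y ^ 2 + t ^ 2)⁻¹ : ℝ)) ∧
      ∫ t : ℝ, H (a + t * Complex.I) * ((y ^ 2 + t ^ 2)⁻¹ : ℝ) = H (a + y) * (π / y : ℝ) := by
  obtain ⟨hGint, hGzero⟩ := integral_dslope_div_eq_zero hH hM ha hy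
  have hsplit : ∀ t : ℝ, H (a + t * Complex.I) * ((y ^ 2 + t ^ 2)⁻¹ : ℝ) =
      H (a + y) * ((y ^ 2 + t ^ 2)⁻¹ : ℝ) -
        dslope H (a + y) (a + t * Complex.I) / (a + t * Complex.I - (a - y)) := by
    intro t
    have hright : (t * Complex.I - y : ℂ) ≠ 0 := fun h =>
      hy.ne' (by simpa using congr_arg Complex.re h)
    have hleft : (t * Complex.I + y : ℂ) ≠ 0 := fun h =>
      hy.ne' (by simpa using congr_arg Complex.re h)
    have hprod : (y ^ 2 + t ^ 2 : ℂ) = -((t * Complex.I - y) * (t * Complex.I + y)) := by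
      linear_combination t ^ 2 * Complex.I_sq
    rw [dslope_of_ne _ (by rw [ne_eq, add_right_inj]; exact sub_ne_zero.1 hright), slope_def_field]
    push_cast
    rw [hprod, add_sub_add_left_eq_sub,
      show (a + t * Complex.I - (a - y) : ℂ) = t * Complex.I + y by ring]
    field_simp
    ring
  have hker : Integrable fun t : ℝ => (((y ^ 2 + t ^ 2)⁻¹ : ℝ) : ℂ) :=
    (integrable_inv_sq_add_sq hy.ne').ofReal
  refine ⟨((hker.const_mul _).sub hGint).congr (Eventually.of_forall fun t => (hsplit t).symm), ?_⟩
  simp_rw [hsplit]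
  rw [integral_sub (hker.const_mul _) hGint, hGzero, sub_zero, integral_const_mul,
    integral_complex_ofReal, integral_univ_inv_sq_add_sq hy]

lemma integrable_and_integral_le_of_tendsto {g : ℕ → ℝ → ℝ} {f : ℝ → ℝ} {b : ℕ → ℝ} {B : ℝ}
    (hg : ∀ n, Integrable (g n)) (hg₀ : ∀ n t, 0 ≤ g n t) (hgb : ∀ n, ∫ t, g n t ≤ b n)
    (hgf : ∀ t, Tendsto (g · t) atTop (𝓝 (f t))) (hb : Tendsto b atTop (𝓝 B)) :
    Integrable f ∧ ∫ t, f t ≤ B := by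
  have hf₀ : ∀ t, 0 ≤ f t := fun t => ge_of_tendsto' (hgf t) fun n => hg₀ n t
  have hB : 0 ≤ B := ge_of_tendsto' hb fun n => (integral_nonneg (hg₀ n)).trans (hgb n)
  have hFatou : ∫⁻ t, ‖f t‖ₑ ≤ ENNReal.ofReal B := by
    refine (lintegral_enorm_le_liminf_of_tendsto (Eventually.of_forall hgf)
      fun n => (hg n).aestronglyMeasurable.aemeasurable.enorm).trans ?_
    rw [← (ENNReal.tendsto_ofReal hb).liminf_eq]
    refine liminf_le_liminf (Eventually.of_forall fun n => ?_)
    rw [← ofReal_integral_norm_eq_lintegral_enorm (hg n)]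
    refine ENNReal.ofReal_le_ofReal ((integral_congr_ae ?_).trans_le (hgb n))
    exact Eventually.of_forall fun t => Real.norm_of_nonneg (hg₀ n t)
  have hf : Integrable f := ⟨aestronglyMeasurable_of_tendsto_ae _
    (fun n => (hg n).aestronglyMeasurable) (Eventually.of_forall hgf),
    hFatou.trans_lt ENNReal.ofReal_lt_top⟩
  refine ⟨hf, ?_⟩
  rw [← ofReal_integral_norm_eq_lintegral_enorm hf, ENNReal.ofReal_le_ofReal_iff hB] at hFatou
  simpa only [Real.norm_of_nonneg (hf₀ _)] using hFatou

lemma re_div_one_add_mul_nonneg {z : ℂ} (hz : 0 ≤ z.re) {ε : ℝ} (hε : 0 ≤ ε) :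
    0 ≤ (z / (1 + ε * z)).re := by
  rw [Complex.div_re, ← add_div]
  refine div_nonneg ?_ (Complex.normSq_nonneg _)
  simp only [Complex.add_re, Complex.one_re, Complex.mul_re, Complex.ofReal_re, Complex.ofReal_im,
    Complex.add_im, Complex.one_im, Complex.mul_im]
  nlinarith [mul_nonneg hε (add_nonneg (sq_nonneg z.re) (sq_nonneg z.im))]

lemma one_add_mul_ne_zero_of_re_nonneg {z : ℂ} (hz : 0 ≤ z.re) {ε : ℝ} (hε : 0 ≤ ε) :
    1 + ε * z ≠ 0 := fun h => by
  have hre := congr_arg Complex.re h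
  simp only [Complex.add_re, Complex.one_re, Complex.re_ofReal_mul, Complex.zero_re] at hre
  nlinarith [mul_nonneg hε hz]

lemma norm_div_one_add_mul_le {z : ℂ} (hz : 0 ≤ z.re) {ε : ℝ} (hε : 0 < ε) :
    ‖z / (1 + ε * z)‖ ≤ ε⁻¹ := by
  have hpos := norm_pos_iff.2 (one_add_mul_ne_zero_of_re_nonneg hz hε.le)
  rw [norm_div, ← one_div, div_le_div_iff₀ hpos hε, one_mul]
  refine le_of_sq_le_sq ?_ hpos.le
  rw [mul_pow, Complex.sq_norm, Complex.sq_norm, Complex.normSq_apply, Complex.normSq_apply]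
  simp only [Complex.add_re, Complex.one_re, Complex.re_ofReal_mul, Complex.add_im, Complex.one_im,
    Complex.im_ofReal_mul]
  nlinarith [mul_nonneg hε.le hz]

-- Poisson's formula holds for the bounded functions `F / (1 + ε F)`; let `ε → 0`.
lemma integral_poisson_le_of_re_nonneg {F : ℂ → ℂ} (hF : DifferentiableOn ℂ F (rightHalfPlane c))
    (hF₀ : ∀ s ∈ rightHalfPlane c, 0 ≤ (F s).re) (ha : c < a) (hy : 0 < y) :
    Integrable (fun t : ℝ => (F (a + t * Complex.I)).re * (y ^ 2 + t ^ 2)⁻¹) ∧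
      ∫ t : ℝ, (F (a + t * Complex.I)).re * (y ^ 2 + t ^ 2)⁻¹ ≤ (F (a + y)).re * (π / y) := by
  set ε : ℕ → ℝ := fun n => 1 / (n + 1)
  have hε : ∀ n, 0 < ε n := fun n => Nat.one_div_pos_of_nat
  set H : ℕ → ℂ → ℂ := fun n s => F s / (1 + ε n * F s)
  have hHlim : ∀ s, Tendsto (fun n => (H n s).re) atTop (𝓝 (F s).re) := by
    intro s
    have hε₀ : Tendsto (fun n => (ε n : ℂ)) atTop (𝓝 0) := by
      simpa [ε] using tendsto_one_div_add_atTop_nhds_zero_nat (𝕜 := ℂ)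
    have hden : Tendsto (fun n => 1 + ε n * F s) atTop (𝓝 1) := by
      simpa using (hε₀.mul_const (F s)).const_add 1
    have hquot : Tendsto (fun n => H n s) atTop (𝓝 (F s / 1)) :=
      tendsto_const_nhds.div hden one_ne_zero
    exact (Complex.continuous_re.tendsto _).comp (div_one (F s) ▸ hquot)
  have hline : ∀ t : ℝ, (a + t * Complex.I : ℂ) ∈ rightHalfPlane c := fun t => by
    simpa [rightHalfPlane] using ha
  have hPoisson := fun n => integral_poisson_of_bounded (H := H n)
    (hF.div ((hF.const_mul _).const_add _) fun s hs =>
      one_add_mul_ne_zero_of_re_nonneg (hF₀ s hs) (hε n).le)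
    (fun s hs => norm_div_one_add_mul_le (hF₀ s hs) (hε n)) ha hy
  have hre : ∀ n (t : ℝ), (H n (a + t * Complex.I) * ((y ^ 2 + t ^ 2)⁻¹ : ℝ)).re =
      (H n (a + t * Complex.I)).re * (y ^ 2 + t ^ 2)⁻¹ := fun n t => Complex.re_mul_ofReal _ _
  refine integrable_and_integral_le_of_tendsto (b := fun n => (H n (a + y)).re * (π / y))
    (fun n => (hPoisson n).1.re.congr (Eventually.of_forall (hre n)))
    (fun n t => mul_nonneg (re_div_one_add_mul_nonneg (hF₀ _ (hline t)) (hε n).le) (by positivity))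
    (fun n => ?_) (fun t => (hHlim _).mul_const _) ((hHlim _).mul_const _)
  calc ∫ t : ℝ, (H n (a + t * Complex.I)).re * (y ^ 2 + t ^ 2)⁻¹
      = (∫ t : ℝ, H n (a + t * Complex.I) * ((y ^ 2 + t ^ 2)⁻¹ : ℝ)).re := by
        simp_rw [← hre]; exact integral_re (hPoisson n).1
    _ ≤ (H n (a + y)).re * (π / y) := by rw [(hPoisson n).2, Complex.re_mul_ofReal]

end Poisson

/-! ### The logarithm of the zeta function under the Riemann hypothesis -/

section FractIoi

/-- The fractional part of `t`, cut off to `t > 1`. Its Mellin transform at `-s` continues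
`ζ(s) - s / (s - 1)` to the half-plane `Re s > 0`, up to a factor `-s`. -/
def fractIoi : ℝ → ℂ := (Ioi 1).indicator fun t => ((Int.fract t : ℝ) : ℂ)

lemma norm_fractIoi_le (t : ℝ) : ‖fractIoi t‖ ≤ 1 := by
  refine (norm_indicator_le_norm_self _ t).trans ?_
  rw [Complex.norm_real, Real.norm_of_nonneg (Int.fract_nonneg t)]
  exact (Int.fract_lt_one t).le

lemma measurable_fractIoi : Measurable fractIoi :=
  (Complex.measurable_ofReal.comp measurable_fract).indicator measurableSet_Ioi

lemma mellin_fractIoi_neg (s : ℂ) :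
    mellin fractIoi (-s) = ∫ t in Ioi (1 : ℝ), ((Int.fract t : ℝ) : ℂ) * (t : ℂ) ^ (-(s + 1)) := by
  have hindicator : ∀ t : ℝ, (t : ℂ) ^ (-s - 1) • fractIoi t =
      (Ioi (1 : ℝ)).indicator (fun t => ((Int.fract t : ℝ) : ℂ) * (t : ℂ) ^ (-(s + 1))) t := by
    intro t
    by_cases ht : t ∈ Ioi (1 : ℝ)
    · rw [fractIoi, indicator_of_mem ht, indicator_of_mem ht, smul_eq_mul, mul_comm, neg_add']
    · rw [fractIoi, indicator_of_notMem ht, indicator_of_notMem ht, smul_zero]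
  simp_rw [mellin, hindicator]
  rw [setIntegral_indicator measurableSet_Ioi, inter_eq_right.2 (Ioi_subset_Ioi zero_le_one)]

variable {s : ℂ}

lemma differentiableAt_mellin_fractIoi_neg (hs : 0 < s.re) :
    DifferentiableAt ℂ (fun z => mellin fractIoi (-z)) s := by
  have hbigO : ∀ (l : Filter ℝ), fractIoi =O[l] fun _ => (1 : ℝ) := fun l =>
    .of_bound 1 (Eventually.of_forall fun t => by simpa using norm_fractIoi_le t)
  have hzero : fractIoi =ᶠ[𝓝[>] 0] 0 := by
    filter_upwards [nhdsWithin_le_nhds (Iio_mem_nhds one_pos)] with t ht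
    exact indicator_of_notMem (notMem_Ioi.2 (le_of_lt ht)) _
  have hloc : LocallyIntegrable fractIoi := (locallyIntegrable_const (1 : ℝ)).mono
    measurable_fractIoi.aestronglyMeasurable
    (Eventually.of_forall fun t => by simpa using norm_fractIoi_le t)
  have hmellin : DifferentiableAt ℂ (mellin fractIoi) (-s) :=
    mellin_differentiableAt_of_isBigO_rpow (a := 0) (b := -s.re - 1)
      (hloc.locallyIntegrableOn _) (by simpa using hbigO atTop) (by simpa using hs)
      (hzero.trans_isBigO (Asymptotics.isBigO_zero _ _)) (by simp)
  exact hmellin.comp s (differentiable_neg s)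

lemma norm_mellin_fractIoi_neg_le (hs : 0 < s.re) : ‖mellin fractIoi (-s)‖ ≤ 1 / s.re := by
  have hexp : -(s.re + 1) < -1 := by linarith
  calc ‖mellin fractIoi (-s)‖ ≤ ∫ t in Ioi (1 : ℝ), t ^ (-(s.re + 1)) := by
        rw [mellin_fractIoi_neg]
        refine norm_integral_le_of_norm_le (integrableOn_Ioi_rpow_of_lt hexp one_pos) ?_
        filter_upwards [ae_restrict_mem measurableSet_Ioi] with t ht
        have ht₀ : 0 < t := zero_lt_one.trans ht
        rw [norm_mul, Complex.norm_cpow_eq_rpow_re_of_pos ht₀, Complex.norm_real,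
          Real.norm_of_nonneg (Int.fract_nonneg t)]
        exact mul_le_of_le_one_left (rpow_nonneg ht₀.le _) (Int.fract_lt_one t).le
    _ = 1 / s.re := by rw [integral_Ioi_rpow_of_lt hexp one_pos]; simp

lemma riemannZeta_eq_of_one_lt_re (hs : 1 < s.re) :
    riemannZeta s = s / (s - 1) - s * mellin fractIoi (-s) := by
  have hs' : -(s + 1).re < -1 := by rw [Complex.add_re, Complex.one_re]; linarith
  have : s - 1 ≠ 0 := fun h => by simp [sub_eq_zero.1 h] at hs
  have hpow : ∫ t in Ioi (1 : ℝ), (t : ℂ) ^ (-s) = 1 / (s - 1) := by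
    rw [integral_Ioi_cpow_of_lt (by simpa using hs) one_pos, Complex.ofReal_one, Complex.one_cpow,
      show -s + 1 = -(s - 1) by ring, neg_div_neg_eq]
  have hpow_int : IntegrableOn (fun t : ℝ => (t : ℂ) ^ (-s)) (Ioi 1) :=
    integrableOn_Ioi_cpow_of_lt (by simpa using hs) one_pos
  have hfract_int :
      IntegrableOn (fun t : ℝ => ((Int.fract t : ℝ) : ℂ) * (t : ℂ) ^ (-(s + 1))) (Ioi 1) := by
    refine (integrableOn_Ioi_cpow_of_lt (by simpa using hs') one_pos).bdd_mul (c := 1)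
      (Complex.measurable_ofReal.comp measurable_fract).aestronglyMeasurable ?_
    refine Eventually.of_forall fun t => ?_
    simpa [abs_of_nonneg (Int.fract_nonneg t)] using (Int.fract_lt_one t).le
  have habel := LSeries_eq_mul_integral_of_nonneg (fun _ => 1) zero_le_one hs
    (by simpa using Asymptotics.isBigO_refl _ _) fun _ => zero_le_one
  rw [show (fun _ : ℕ => ((1 : ℝ) : ℂ)) = 1 by ext; simp, LSeries_one_eq_riemannZeta hs] at habel
  rw [habel, mellin_fractIoi_neg, div_eq_mul_one_div, ← mul_sub, ← hpow,
    ← integral_sub hpow_int hfract_int]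
  congr 1
  refine setIntegral_congr_fun measurableSet_Ioi fun t ht => ?_
  have ht₀ : (0 : ℝ) < t := zero_lt_one.trans ht
  have hsplit : (t : ℂ) ^ (-s) = t * (t : ℂ) ^ (-(s + 1)) := by
    rw [show -s = 1 + -(s + 1) by ring, Complex.cpow_add _ _ (by exact_mod_cast ht₀.ne'),
      Complex.cpow_one]
  have hcount : ((∑ k ∈ Finset.Icc 1 ⌊t⌋₊, (1 : ℕ → ℂ) k : ℂ)) = t - (Int.fract t : ℝ) := by
    rw [← Complex.ofReal_sub, Int.self_sub_fract, ← natCast_floor_eq_intCast_floor ht₀.le]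
    simp
  simp only [hsplit, ← sub_mul]
  rw [← hcount]

lemma riemannZeta₁_eq_of_pos_re (hs : 0 < s.re) :
    riemannZeta₁ s = s - s * (s - 1) * mellin fractIoi (-s) := by
  have hU := isOpen_rightHalfPlane 0
  have hdiff : DifferentiableOn ℂ (fun z => z - z * (z - 1) * mellin fractIoi (-z))
      (rightHalfPlane 0) := fun z hz =>
    (differentiableAt_id.sub (DifferentiableAt.mul (by fun_prop)
      (differentiableAt_mellin_fractIoi_neg hz))).differentiableWithinAt
  refine AnalyticOnNhd.eqOn_of_preconnected_of_eventuallyEq (z₀ := 2)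
    (differentiable_riemannZeta₁.differentiableOn.analyticOnNhd hU) (hdiff.analyticOnNhd hU)
    (convex_halfSpace_re_gt 0).isPreconnected (by simp [rightHalfPlane]) ?_ hs
  filter_upwards [(isOpen_rightHalfPlane 1).mem_nhds (by simp [rightHalfPlane])] with z hz
  have hone : z ≠ 1 := fun h => by simp [rightHalfPlane, h] at hz
  have hzeta := riemannZeta_eq_inv_sub_mul hone
  rw [riemannZeta_eq_of_one_lt_re hz] at hzeta
  have := sub_ne_zero.2 hone
  field_simp at hzeta
  linear_combination -hzeta

end FractIoi

lemma norm_riemannZeta₁_le {s : ℂ} (hs : 0 < s.re) :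
    ‖riemannZeta₁ s‖ ≤ ‖s‖ * (1 + ‖s - 1‖ / s.re) := by
  calc ‖riemannZeta₁ s‖ ≤ ‖s‖ + ‖s‖ * ‖s - 1‖ * ‖mellin fractIoi (-s)‖ := by
        rw [riemannZeta₁_eq_of_pos_re hs, ← norm_mul, ← norm_mul]; exact norm_sub_le _ _
    _ ≤ ‖s‖ + ‖s‖ * ‖s - 1‖ * (1 / s.re) := by gcongr; exact norm_mellin_fractIoi_neg_le hs
    _ = ‖s‖ * (1 + ‖s - 1‖ / s.re) := by ring

lemma norm_riemannZeta₁_le_sq {s : ℂ} (hs : 1 / 2 ≤ s.re) : ‖riemannZeta₁ s‖ ≤ 8 * ‖s‖ ^ 2 := by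
  have hre : s.re ≤ ‖s‖ := Complex.re_le_norm s
  have hone : ‖s - 1‖ ≤ ‖s‖ + 1 := by simpa using norm_sub_le s 1
  calc ‖riemannZeta₁ s‖ ≤ ‖s‖ * (1 + ‖s - 1‖ / s.re) := norm_riemannZeta₁_le (by linarith)
    _ ≤ ‖s‖ * (1 + (‖s‖ + 1) / (1 / 2)) := by gcongr
    _ ≤ 8 * ‖s‖ ^ 2 := by nlinarith

lemma riemannZeta₁_ne_zero (hRH : RiemannHypothesis) {s : ℂ} (hs : 1 / 2 < s.re) :
    riemannZeta₁ s ≠ 0 := by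
  rcases eq_or_ne s 1 with rfl | hone
  · simp
  · intro hzero
    have hzeta : riemannZeta s = 0 := by rw [riemannZeta_eq_inv_sub_mul hone, hzero, mul_zero]
    refine hs.ne' (hRH s hzeta ?_ hone)
    rintro ⟨n, rfl⟩
    have : (0 : ℝ) ≤ n := n.cast_nonneg
    simp only [Complex.mul_re, Complex.neg_re, Complex.neg_im, Complex.re_ofNat, Complex.im_ofNat,
      Complex.add_re, Complex.natCast_re, Complex.one_re] at hs
    linarith

-- `1 / ζ` is the L-series of the Möbius function, so it is bounded by `ζ(2) = π² / 6`.
lemma le_norm_riemannZeta {s : ℂ} (hs : 2 ≤ s.re) : 6 / π ^ 2 ≤ ‖riemannZeta s‖ := by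
  set μ : ℕ → ℂ := fun n => ArithmeticFunction.moebius n
  have hterm : ∀ n, ‖LSeries.term μ s n‖ ≤ 1 / (n : ℝ) ^ 2 := by
    intro n
    rcases eq_or_ne n 0 with rfl | hn
    · simp
    · have hn₁ : (1 : ℝ) ≤ n := by exact_mod_cast Nat.one_le_iff_ne_zero.2 hn
      have hμ : ‖μ n‖ ≤ 1 := by
        simpa [μ] using mod_cast ArithmeticFunction.abs_moebius_le_one (n := n)
      rw [LSeries.norm_term_eq, if_neg hn, ← rpow_two]
      gcongr
  have hμ : ‖LSeries μ s‖ ≤ π ^ 2 / 6 := tsum_of_norm_bounded hasSum_zeta_two hterm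
  have hprod : ‖riemannZeta s‖ * ‖LSeries μ s‖ = 1 := by
    rw [← norm_mul, ← LSeries_one_eq_riemannZeta (by linarith),
      LSeries_one_mul_Lseries_moebius (by linarith), norm_one]
  rw [div_le_iff₀ (by positivity)]
  nlinarith [norm_nonneg (riemannZeta s)]

/-- A holomorphic logarithm of `16 s² / ((s - 1) ζ(s))` on the half-plane `Re s > 1 / 2`. The
normalisation makes its real part positive, while its derivative remains elementary up to the
Dirichlet series of the von Mangoldt function. -/
structure IsLogInvZeta (F : ℂ → ℂ) : Prop where
  differentiableOn : DifferentiableOn ℂ F (rightHalfPlane (1 / 2))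
  exp_eq : ∀ s ∈ rightHalfPlane (1 / 2), Complex.exp (F s) = 16 * s ^ 2 / riemannZeta₁ s

lemma exists_isLogInvZeta (hRH : RiemannHypothesis) : ∃ F, IsLogInvZeta F := by
  have hzeta : ∀ s ∈ rightHalfPlane (1 / 2), riemannZeta₁ s ≠ 0 :=
    fun _ hs => riemannZeta₁_ne_zero hRH hs
  obtain ⟨F, hF, hexp⟩ := exists_differentiableOn_exp_eq (isSimplyConnected_rightHalfPlane (1 / 2))
    (isOpen_rightHalfPlane _) (g := fun s => 16 * s ^ 2 / riemannZeta₁ s)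
    (.div (by fun_prop) differentiable_riemannZeta₁.differentiableOn hzeta) fun s hs => by
      have hs₀ : s ≠ 0 := fun h => by norm_num [rightHalfPlane, h] at hs
      exact div_ne_zero (by simpa using hs₀) (hzeta s hs)
  exact ⟨F, hF, hexp⟩

namespace IsLogInvZeta

variable {F : ℂ → ℂ} {s : ℂ}

lemma ne_zero (hF : IsLogInvZeta F) (hs : s ∈ rightHalfPlane (1 / 2)) : riemannZeta₁ s ≠ 0 :=
  fun h => Complex.exp_ne_zero (F s) (by rw [hF.exp_eq s hs, h, div_zero])

lemma exp_re_eq (hF : IsLogInvZeta F) (hs : s ∈ rightHalfPlane (1 / 2)) :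
    Real.exp (F s).re = 16 * ‖s‖ ^ 2 / ‖riemannZeta₁ s‖ := by
  simpa [Complex.norm_exp] using congr_arg norm (hF.exp_eq s hs)

lemma re_pos (hF : IsLogInvZeta F) (hs : s ∈ rightHalfPlane (1 / 2)) : 0 < (F s).re := by
  have hs' : 1 / 2 < s.re := hs
  rw [← Real.one_lt_exp_iff, hF.exp_re_eq hs, one_lt_div (norm_pos_iff.2 (hF.ne_zero hs))]
  have hnorm := hs'.trans_le (Complex.re_le_norm s)
  nlinarith [norm_riemannZeta₁_le_sq hs'.le]

lemma re_le_log (hF : IsLogInvZeta F) (hs : 2 ≤ s.re) : (F s).re ≤ Real.log (128 * ‖s‖) := by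
  have hnorm : 2 ≤ ‖s‖ := hs.trans (Complex.re_le_norm s)
  have hone : s ≠ 1 := fun h => by norm_num [h] at hs
  have hsub : ‖s‖ / 2 ≤ ‖s - 1‖ := by
    have := norm_sub_norm_le s 1
    rw [norm_one] at this
    linarith
  have hzeta : 1 / 4 ≤ ‖riemannZeta s‖ := by
    refine le_trans ?_ (le_norm_riemannZeta hs)
    rw [div_le_div_iff₀ (by norm_num) (by positivity)]
    nlinarith [pi_pos, pi_le_four]
  have hzeta₁ : ‖s‖ / 2 * (1 / 4) ≤ ‖riemannZeta₁ s‖ := by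
    rw [← mul_inv_cancel_left₀ (sub_ne_zero.2 hone) (riemannZeta₁ s),
      ← riemannZeta_eq_inv_sub_mul hone, norm_mul]
    gcongr
  have hsU : s ∈ rightHalfPlane (1 / 2) := (by linarith : 1 / 2 < s.re)
  rw [le_log_iff_exp_le (by positivity), hF.exp_re_eq hsU, div_le_iff₀ (by linarith)]
  nlinarith

lemma deriv_eq (hF : IsLogInvZeta F) (hs : 1 < s.re) :
    deriv F s = 2 / s - 1 / (s - 1) + LSeries (fun n => ArithmeticFunction.vonMangoldt n) s := by
  have hsU : s ∈ rightHalfPlane (1 / 2) := (by linarith : 1 / 2 < s.re)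
  have hU := (isOpen_rightHalfPlane (1 / 2)).mem_nhds hsU
  have hs₀ : s ≠ 0 := fun h => by norm_num [h] at hs
  have hone : s ≠ 1 := fun h => by norm_num [h] at hs
  have hzeta : riemannZeta s ≠ 0 := riemannZeta_ne_zero_of_one_lt_re hs
  have hlog : Complex.exp ∘ F =ᶠ[𝓝 s] fun z => 16 * z ^ 2 / ((z - 1) * riemannZeta z) := by
    filter_upwards [hU, isOpen_ne.mem_nhds hone] with z hz hz₁
    rw [Function.comp_apply, hF.exp_eq z hz, riemannZeta_eq_inv_sub_mul hz₁,
      mul_inv_cancel_left₀ (sub_ne_zero.2 hz₁)]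
  have hlogDeriv := (logDeriv_congr_nhds hlog).eq_of_nhds
  rw [logDeriv_comp (by fun_prop) (hF.differentiableOn.differentiableAt hU), Complex.logDeriv_exp,
    Pi.one_apply, one_mul,
    logDeriv_div (g := fun z => (z - 1) * riemannZeta z) s (by simpa using hs₀)
      (mul_ne_zero (sub_ne_zero.2 hone) hzeta) (by fun_prop)
      (.mul (by fun_prop) (differentiableAt_riemannZeta hone)),
    logDeriv_const_mul s 16 (by norm_num), logDeriv_pow,
    logDeriv_mul (f := (· - 1)) s (sub_ne_zero.2 hone) hzeta (by fun_prop)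
      (differentiableAt_riemannZeta hone),
    logDeriv_apply, logDeriv_apply, deriv_sub_const, deriv_id''] at hlogDeriv
  rw [hlogDeriv, ArithmeticFunction.LSeries_vonMangoldt_eq_deriv_riemannZeta_div hs]
  push_cast
  ring

end IsLogInvZeta

/-! ### The logarithmic tent and its Mellin transform -/

/-- The tent of half-width `η` and height `η` in the variable `log u`, used as a smoothing kernel.
Only `u > 0` is meaningful: the junk value `log 0 = 0` gives `tent η 0 = η`. -/
def tent (η u : ℝ) : ℝ := max 0 (η - |log u|)

/-- The Mellin transform of the tent, the weight in the explicit formula. It decays like `|s|⁻²` on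
vertical lines, so that every integral over `Re s = σ` converges absolutely. -/
def tentMellin (η : ℝ) : ℂ → ℂ := mellin fun u => (tent η u : ℂ)

section Tent

variable {η u : ℝ} {s : ℂ}

lemma tent_nonneg (η u : ℝ) : 0 ≤ tent η u := le_max_left _ _

lemma tent_le (hη : 0 ≤ η) (u : ℝ) : tent η u ≤ η :=
  max_le hη (sub_le_self _ (abs_nonneg _))

lemma tent_eq_zero_of_notMem (hu : 0 < u) (h : u ∉ Ioo (Real.exp (-η)) (Real.exp η)) :
    tent η u = 0 := by
  rw [mem_Ioo, not_and_or, not_lt, not_lt] at h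
  refine max_eq_left (sub_nonpos.2 (le_abs'.2 (h.imp ?_ ?_)))
  exacts [(log_le_iff_le_exp hu).2, (le_log_iff_exp_le hu).2]

lemma tent_eq_of_le_one (hu : u ∈ Icc (Real.exp (-η)) 1) : tent η u = η + log u := by
  have hu₀ : 0 < u := (Real.exp_pos _).trans_le hu.1
  have hlog := (le_log_iff_exp_le hu₀).2 hu.1
  rw [tent, abs_of_nonpos (log_nonpos hu₀.le hu.2), sub_neg_eq_add, max_eq_right (by linarith)]

lemma tent_eq_of_one_le (hu : u ∈ Icc 1 (Real.exp η)) : tent η u = η - log u := by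
  have hlog := (log_le_iff_le_exp (zero_lt_one.trans_le hu.1)).2 hu.2
  rw [tent, abs_of_nonneg (log_nonneg hu.1), max_eq_right (by linarith)]

lemma continuousAt_tent (hu : u ≠ 0) : ContinuousAt (tent η) u := by
  have := continuousAt_log hu
  unfold tent
  fun_prop

lemma continuousOn_cpow_smul_tent (η : ℝ) (s : ℂ) :
    ContinuousOn (fun u : ℝ => (u : ℂ) ^ (s - 1) • (tent η u : ℂ)) (Ioi 0) := fun u hu => by
  have hcpow : ContinuousAt (fun t : ℝ => (t : ℂ) ^ (s - 1)) u :=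
    Complex.continuousAt_ofReal_cpow_const _ _ (Or.inr (ne_of_gt hu))
  have htent : ContinuousAt (fun t : ℝ => (tent η t : ℂ)) u :=
    Complex.continuous_ofReal.continuousAt.comp (continuousAt_tent (ne_of_gt hu))
  exact (hcpow.smul htent).continuousWithinAt

lemma cpow_smul_tent_eq_zero (s : ℂ) (hu : u ∈ Ioi 0 \ Ioc (Real.exp (-η)) (Real.exp η)) :
    (u : ℂ) ^ (s - 1) • (tent η u : ℂ) = 0 := by
  rw [tent_eq_zero_of_notMem hu.1 fun h => hu.2 (Ioo_subset_Ioc_self h), Complex.ofReal_zero,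
    smul_zero]

lemma mellinConvergent_tent (η : ℝ) (s : ℂ) :
    MellinConvergent (fun u => (tent η u : ℂ)) s := by
  refine IntegrableOn.of_forall_sdiff_eq_zero (s := Ioc (Real.exp (-η)) (Real.exp η))
    (IntegrableOn.mono_set ?_ Ioc_subset_Icc_self) measurableSet_Ioi
    fun u hu => cpow_smul_tent_eq_zero s hu
  exact ((continuousOn_cpow_smul_tent η s).mono fun u hu =>
    (Real.exp_pos _).trans_le hu.1).integrableOn_Icc

lemma tentMellin_eq_intervalIntegral (hη : 0 ≤ η) (s : ℂ) :
    tentMellin η s = ∫ u in Real.exp (-η)..Real.exp η, (u : ℂ) ^ (s - 1) • (tent η u : ℂ) := by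
  rw [intervalIntegral.integral_of_le (Real.exp_le_exp.2 (by linarith))]
  exact setIntegral_eq_of_subset_of_forall_sdiff_eq_zero measurableSet_Ioi
    (fun u hu => (Real.exp_pos _).trans hu.1) fun u hu => cpow_smul_tent_eq_zero s hu

lemma integral_cpow_mul_add_log {a b : ℝ} (ha : 0 < a) (hb : 0 < b) (hs : s ≠ 0) (A c : ℂ) :
    ∫ u in a..b, (u : ℂ) ^ (s - 1) * (A + c * log u) =
      (b : ℂ) ^ s * ((A + c * log b) / s - c / s ^ 2) -
        (a : ℂ) ^ s * ((A + c * log a) / s - c / s ^ 2) := by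
  have hpos : ∀ u ∈ uIcc a b, 0 < u := fun u hu => (lt_min ha hb).trans_le hu.1
  refine intervalIntegral.integral_eq_sub_of_hasDerivAt
    (f := fun u : ℝ => (u : ℂ) ^ s * ((A + c * log u) / s - c / s ^ 2)) (fun u hu => ?_)
    (ContinuousOn.intervalIntegrable fun u hu => ?_)
  · have hu₀ : (u : ℂ) ≠ 0 := by exact_mod_cast (hpos u hu).ne'
    have hcpow : HasDerivAt (fun u : ℝ => (u : ℂ) ^ s) (s * (u : ℂ) ^ (s - 1)) u := by
      simpa using ((hasDerivAt_id (u : ℂ)).cpow_const (c := s)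
        (Or.inl (by simpa using hpos u hu))).comp_ofReal
    have hlog : HasDerivAt (fun u : ℝ => (log u : ℂ)) (u⁻¹ : ℝ) u :=
      (hasDerivAt_log (hpos u hu).ne').ofReal_comp
    refine (hcpow.mul ((((hlog.const_mul c).const_add A).div_const s).sub_const
      (c / s ^ 2))).congr_deriv ?_
    rw [show (u : ℂ) ^ s = (u : ℂ) ^ (s - 1) * u by
      rw [Complex.cpow_sub _ _ hu₀, Complex.cpow_one]; field_simp]
    push_cast
    field_simp
    ring
  · have hcpow : ContinuousAt (fun u : ℝ => (u : ℂ) ^ (s - 1)) u :=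
      Complex.continuousAt_ofReal_cpow_const _ _ (Or.inr (hpos u hu).ne')
    have hlog := Complex.continuous_ofReal.continuousAt.comp (continuousAt_log (hpos u hu).ne')
    exact (hcpow.mul (continuousAt_const.add (continuousAt_const.mul hlog))).continuousWithinAt

lemma ofReal_exp_cpow (r : ℝ) (s : ℂ) : (Real.exp r : ℂ) ^ s = Complex.exp (r * s) := by
  rw [Complex.cpow_def_of_ne_zero (by exact_mod_cast (Real.exp_pos r).ne'),
    ← Complex.ofReal_log (Real.exp_pos r).le, log_exp]

lemma tentMellin_eq (hη : 0 ≤ η) (hs : s ≠ 0) :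
    tentMellin η s = (Complex.exp (η * s) + Complex.exp (-(η * s)) - 2) / s ^ 2 := by
  have hle : Real.exp (-η) ≤ 1 := exp_le_one_iff.2 (by linarith)
  have hge : 1 ≤ Real.exp η := one_le_exp hη
  have hint : ∀ a b : ℝ, 0 < a → 0 < b → IntervalIntegrable
      (fun u : ℝ => (u : ℂ) ^ (s - 1) • (tent η u : ℂ)) volume a b := fun a b ha hb =>
    ((continuousOn_cpow_smul_tent η s).mono fun u hu =>
      (lt_min ha hb).trans_le hu.1).intervalIntegrable
  have hleft : ∫ u in Real.exp (-η)..1, (u : ℂ) ^ (s - 1) • (tent η u : ℂ) =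
      ∫ u in Real.exp (-η)..1, (u : ℂ) ^ (s - 1) * (η + 1 * log u) := by
    refine intervalIntegral.integral_congr fun u hu => ?_
    rw [uIcc_of_le hle] at hu
    simp [tent_eq_of_le_one hu]
  have hright : ∫ u in 1..Real.exp η, (u : ℂ) ^ (s - 1) • (tent η u : ℂ) =
      ∫ u in 1..Real.exp η, (u : ℂ) ^ (s - 1) * (η + -1 * log u) := by
    refine intervalIntegral.integral_congr fun u hu => ?_
    rw [uIcc_of_le hge] at hu
    simp [tent_eq_of_one_le hu, sub_eq_add_neg]
  rw [tentMellin_eq_intervalIntegral hη, ← intervalIntegral.integral_add_adjacent_intervals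
    (hint _ 1 (Real.exp_pos _) one_pos) (hint 1 _ one_pos (Real.exp_pos _)), hleft, hright,
    integral_cpow_mul_add_log (Real.exp_pos _) one_pos hs,
    integral_cpow_mul_add_log one_pos (Real.exp_pos _) hs, ofReal_exp_cpow, ofReal_exp_cpow,
    log_exp, log_exp, log_one, Complex.ofReal_one, Complex.one_cpow]
  push_cast
  rw [neg_mul]
  field_simp
  ring

lemma norm_tentMellin_le_sq_mul_exp (hη : 0 ≤ η) (hs : 0 ≤ s.re) :
    ‖tentMellin η s‖ ≤ 2 * η ^ 2 * Real.exp (η * s.re) := by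
  have hle : Real.exp (-η) ≤ Real.exp η := exp_le_exp.2 (by linarith)
  have hzero : (0 : ℝ) ∉ uIcc (Real.exp (-η)) (Real.exp η) := fun h => by
    rw [uIcc_of_le hle] at h
    exact (Real.exp_pos _).not_ge h.1
  calc ‖tentMellin η s‖
      ≤ ∫ u in Real.exp (-η)..Real.exp η, η * Real.exp (η * s.re) * u⁻¹ := by
        rw [tentMellin_eq_intervalIntegral hη]
        refine intervalIntegral.norm_integral_le_of_norm_le hle
          (Eventually.of_forall fun u hu => ?_)
          ((intervalIntegral.intervalIntegrable_inv (fun x hx h => hzero (h ▸ hx))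
            continuousOn_id).const_mul _)
        have hu₀ : 0 < u := (Real.exp_pos _).trans hu.1
        have hpow : u ^ s.re ≤ Real.exp (η * s.re) := by
          rw [Real.exp_mul]
          exact rpow_le_rpow hu₀.le hu.2 hs
        calc ‖(u : ℂ) ^ (s - 1) • (tent η u : ℂ)‖ = u ^ s.re * u⁻¹ * tent η u := by
              rw [norm_smul, Complex.norm_cpow_eq_rpow_re_of_pos hu₀, Complex.norm_real,
                Real.norm_of_nonneg (tent_nonneg _ _), Complex.sub_re, Complex.one_re,
                rpow_sub_one hu₀.ne', div_eq_mul_inv]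
          _ ≤ Real.exp (η * s.re) * u⁻¹ * η := by
              gcongr
              exacts [tent_nonneg _ _, tent_le hη u]
          _ = η * Real.exp (η * s.re) * u⁻¹ := by ring
    _ = 2 * η ^ 2 * Real.exp (η * s.re) := by
        rw [intervalIntegral.integral_const_mul, integral_inv hzero, ← Real.exp_sub, log_exp]
        ring

lemma norm_tentMellin_mul_sq_le (hη : 0 ≤ η) (hs : 0 < s.re) :
    ‖tentMellin η s‖ * ‖s‖ ^ 2 ≤ 4 * Real.exp (η * s.re) := by
  have hs₀ : s ≠ 0 := fun h => by simp [h] at hs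
  have hone : 1 ≤ Real.exp (η * s.re) := one_le_exp (by positivity)
  have hpos : ‖Complex.exp (η * s)‖ = Real.exp (η * s.re) := by
    rw [Complex.norm_exp, Complex.re_ofReal_mul]
  have hneg : ‖Complex.exp (-(η * s))‖ ≤ 1 := by
    rw [Complex.norm_exp, Real.exp_le_one_iff, Complex.neg_re, Complex.re_ofReal_mul, neg_nonpos]
    positivity
  rw [tentMellin_eq hη hs₀, norm_div, norm_pow, div_mul_cancel₀ _ (by positivity)]
  calc _ ≤ ‖Complex.exp (η * s)‖ + ‖Complex.exp (-(η * s))‖ + ‖(2 : ℂ)‖ :=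
        (norm_sub_le _ _).trans (add_le_add_left (norm_add_le _ _) _)
    _ ≤ Real.exp (η * s.re) + 1 + 2 := by rw [hpos, Complex.norm_two]; gcongr
    _ ≤ 4 * Real.exp (η * s.re) := by linarith

lemma norm_tentMellin_le (hη : 0 < η) (hs : 0 < s.re) :
    ‖tentMellin η s‖ ≤ 6 * Real.exp (η * s.re) * ((1 / η) ^ 2 + s.im ^ 2)⁻¹ := by
  have him : s.im ^ 2 ≤ ‖s‖ ^ 2 := by
    rw [Complex.sq_norm, Complex.normSq_apply]
    nlinarith [sq_nonneg s.re]
  rw [← div_eq_mul_inv, le_div_iff₀ (by positivity)]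
  calc ‖tentMellin η s‖ * ((1 / η) ^ 2 + s.im ^ 2)
      ≤ ‖tentMellin η s‖ * (1 / η) ^ 2 + ‖tentMellin η s‖ * ‖s‖ ^ 2 := by
        rw [mul_add]; gcongr
    _ ≤ 2 * η ^ 2 * Real.exp (η * s.re) * (1 / η) ^ 2 + 4 * Real.exp (η * s.re) := by
        exact add_le_add (mul_le_mul_of_nonneg_right
          (norm_tentMellin_le_sq_mul_exp hη.le hs.le) (by positivity))
          (norm_tentMellin_mul_sq_le hη.le hs)
    _ = 6 * Real.exp (η * s.re) := by field_simp; ring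

lemma differentiableAt_tentMellin (hη : 0 ≤ η) (hs : s ≠ 0) :
    DifferentiableAt ℂ (tentMellin η) s := by
  have hlocal : tentMellin η =ᶠ[𝓝 s]
      fun z => (Complex.exp (η * z) + Complex.exp (-(η * z)) - 2) / z ^ 2 := by
    filter_upwards [isOpen_ne.mem_nhds hs] with z hz using tentMellin_eq hη hz
  have hdiff : DifferentiableAt ℂ
      (fun z : ℂ => (Complex.exp (η * z) + Complex.exp (-(η * z)) - 2) / z ^ 2) s :=
    .div (by fun_prop) (by fun_prop) (pow_ne_zero 2 hs)
  exact hdiff.congr_of_eventuallyEq hlocal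

lemma verticalIntegrable_tentMellin (hη : 0 < η) {σ : ℝ} (hσ : 0 < σ) :
    Complex.VerticalIntegrable (tentMellin η) σ := by
  refine verticalIntegrable_of_norm_le (continuous_iff_continuousAt.2 fun t => ?_)
    ((integrable_inv_sq_add_sq (one_div_pos.2 hη).ne').const_mul (6 * Real.exp (η * σ))) fun t => ?_
  · have hne : (σ + t * Complex.I : ℂ) ≠ 0 := fun h =>
      hσ.ne' (by simpa using congr_arg Complex.re h)
    exact (differentiableAt_tentMellin hη.le hne).continuousAt.comp
      (f := fun t : ℝ => (σ + t * Complex.I : ℂ)) (by fun_prop)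
  · simpa using norm_tentMellin_le hη (s := σ + t * Complex.I) (by simpa using hσ)

end Tent

/-! ### Mellin inversion against a measure -/

section MellinInversion

variable {f : ℝ → ℂ} {σ : ℝ}

lemma integral_cpow_mul_mellin {u : ℝ} (hu : 0 < u) (hf : MellinConvergent f σ)
    (hV : Complex.VerticalIntegrable (mellin f) σ) (hfu : ContinuousAt f u) :
    ∫ t : ℝ, (u : ℂ) ^ (-(σ + t * Complex.I)) * mellin f (σ + t * Complex.I) = 2 * π * f u := by
  have hπ : (2 * π : ℂ) ≠ 0 := by simp [Real.pi_ne_zero]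
  rw [← mellinInv_mellin_eq σ f hu hf hV hfu, mellinInv, Complex.real_smul]
  push_cast
  rw [← mul_assoc, mul_one_div_cancel hπ, one_mul]
  simp only [smul_eq_mul]

lemma ofReal_div_cpow_neg {y x : ℝ} (hy : 0 ≤ y) (hx : 0 < x) (s : ℂ) :
    ((y / x : ℝ) : ℂ) ^ (-s) = (y : ℂ) ^ (-s) * (x : ℂ) ^ s := by
  rw [div_eq_mul_inv, Complex.ofReal_mul, Complex.mul_cpow_ofReal_nonneg hy (inv_pos.2 hx).le,
    Complex.ofReal_inv, Complex.inv_cpow _ _ (by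
      rw [Complex.arg_ofReal_of_nonneg hx.le]; exact pi_pos.ne), Complex.cpow_neg (x : ℂ), inv_inv]

variable {α : Type*} [MeasurableSpace α] {μ : Measure α} {w : α → ℂ} {φ : α → ℝ} {x : ℝ}

lemma integrable_prod_cpow_mul_mellin (hw : Measurable w) (hφ : Measurable φ)
    (hpos : ∀ᵐ a ∂μ, w a ≠ 0 → 0 < φ a) (hint : Integrable (fun a => ‖w a‖ * φ a ^ (-σ)) μ)
    (hV : Complex.VerticalIntegrable (mellin f) σ) (hx : 0 < x) :
    Integrable (fun p : ℝ × α => w p.2 * (φ p.2 : ℂ) ^ (-(σ + p.1 * Complex.I) : ℂ) *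
      ((x : ℂ) ^ (σ + p.1 * Complex.I) * mellin f (σ + p.1 * Complex.I)))
      ((volume : Measure ℝ).prod μ) := by
  have hxc : Continuous fun t : ℝ => (x : ℂ) ^ (σ + t * Complex.I) :=
    .const_cpow (by fun_prop) (Or.inl (by exact_mod_cast hx.ne'))
  refine ((Integrable.norm hV).const_mul (x ^ σ)).mul_prod hint |>.mono'
    (AEStronglyMeasurable.mul ?_ ?_) ?_
  · have hline : Measurable fun p : ℝ × α => (-(σ + p.1 * Complex.I) : ℂ) := by fun_prop
    have hφ' : Measurable fun p : ℝ × α => (φ p.2 : ℂ) := by fun_prop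
    exact ((hw.comp measurable_snd).mul (hφ'.pow hline)).aestronglyMeasurable
  · exact (hxc.aestronglyMeasurable.mul (Integrable.aestronglyMeasurable hV)).comp_fst
  · filter_upwards [Measure.quasiMeasurePreserving_snd.ae hpos] with p hp
    by_cases hw₀ : w p.2 = 0
    · simp [hw₀]
    rw [norm_mul, norm_mul, norm_mul, Complex.norm_cpow_eq_rpow_re_of_pos hx,
      Complex.norm_cpow_eq_rpow_re_of_pos (hp hw₀)]
    apply le_of_eq
    simp only [Complex.neg_re, Complex.add_re, Complex.ofReal_re, Complex.re_ofReal_mul,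
      Complex.I_re, mul_zero, add_zero]
    ring

lemma integrable_integral_cpow_mul_mellin [SFinite μ] (hw : Measurable w)
    (hφ : Measurable φ) (hpos : ∀ᵐ a ∂μ, w a ≠ 0 → 0 < φ a)
    (hint : Integrable (fun a => ‖w a‖ * φ a ^ (-σ)) μ)
    (hV : Complex.VerticalIntegrable (mellin f) σ) (hx : 0 < x) :
    Integrable fun t : ℝ => (∫ a, w a * (φ a : ℂ) ^ (-(σ + t * Complex.I)) ∂μ) *
      ((x : ℂ) ^ (σ + t * Complex.I) * mellin f (σ + t * Complex.I)) := by
  simp only [← integral_mul_const]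
  exact (integrable_prod_cpow_mul_mellin hw hφ hpos hint hV hx).integral_prod_left

lemma integral_integral_cpow_mul_mellin [SFinite μ] (hw : Measurable w)
    (hφ : Measurable φ) (hpos : ∀ᵐ a ∂μ, w a ≠ 0 → 0 < φ a)
    (hint : Integrable (fun a => ‖w a‖ * φ a ^ (-σ)) μ)
    (hf : MellinConvergent f σ) (hV : Complex.VerticalIntegrable (mellin f) σ)
    (hfc : ∀ u, 0 < u → ContinuousAt f u) (hx : 0 < x) :
    ∫ t : ℝ, (∫ a, w a * (φ a : ℂ) ^ (-(σ + t * Complex.I)) ∂μ) *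
      ((x : ℂ) ^ (σ + t * Complex.I) * mellin f (σ + t * Complex.I)) =
      2 * π * ∫ a, w a * f (φ a / x) ∂μ := by
  simp only [← integral_mul_const]
  rw [integral_integral_swap (integrable_prod_cpow_mul_mellin hw hφ hpos hint hV hx),
    ← integral_const_mul]
  refine integral_congr_ae ?_
  filter_upwards [hpos] with a ha
  by_cases hw₀ : w a = 0
  · simp [hw₀]
  have hu : 0 < φ a / x := div_pos (ha hw₀) hx
  calc ∫ t : ℝ, w a * (φ a : ℂ) ^ (-(σ + t * Complex.I)) *
        ((x : ℂ) ^ (σ + t * Complex.I) * mellin f (σ + t * Complex.I))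
      = w a * ∫ t : ℝ, ((φ a / x : ℝ) : ℂ) ^ (-(σ + t * Complex.I)) *
          mellin f (σ + t * Complex.I) := by
        rw [← integral_const_mul]
        congr 1 with t
        rw [ofReal_div_cpow_neg (ha hw₀).le hx]
        ring
    _ = 2 * π * (w a * f (φ a / x)) := by
        rw [integral_cpow_mul_mellin hu hf hV (hfc _ hu)]
        ring

end MellinInversion

/-! ### The explicit formula -/

/-- The prime-counting sum `∑ Λ(n)`, smoothed by the tent of half-width `η` around `x`. It is small
when there is no prime within a factor `exp η` of `x`. -/
def tentPsi (η x : ℝ) : ℝ := ∑' n : ℕ, ArithmeticFunction.vonMangoldt n * tent η (n / x)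

/-- The expected size of `tentPsi`. The weight `1 - 2 / y` has Mellin transform
`1 / (s - 1) - 2 / s` at `1 - s`, the elementary part of `-F'` when `F` is a logarithm of
`16 s² / ((s - 1) ζ(s))`. -/
def tentPsiMain (η x : ℝ) : ℝ := ∫ y in Ioi (1 : ℝ), (1 - 2 / y) * tent η (y / x)

section ExplicitFormula

variable {η σ x : ℝ} {s : ℂ}

lemma integral_count_eq_tsum {α E : Type*} [MeasurableSpace α] [Countable α]
    [MeasurableSingletonClass α] [NormedAddCommGroup E] [NormedSpace ℝ E] [FiniteDimensional ℝ E]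
    (f : α → E) : ∫ a, f a ∂Measure.count = ∑' a, f a := by
  have := FiniteDimensional.complete ℝ E
  by_cases hf : Integrable f Measure.count
  · rw [integral_countable hf]
    simp [measureReal_def]
  · rw [integral_undef hf, tsum_eq_zero_of_not_summable]
    rwa [integrable_count_iff, summable_norm_iff] at hf

lemma LSeries_term_eq_mul_cpow_neg {f : ℕ → ℂ} (hf : f 0 = 0) (s : ℂ) (n : ℕ) :
    LSeries.term f s n = f n * ((n : ℝ) : ℂ) ^ (-s) := by
  rcases eq_or_ne n 0 with rfl | hn
  · simp [hf]
  · rw [LSeries.term_of_ne_zero hn, Complex.cpow_neg, div_eq_mul_inv, Complex.ofReal_natCast]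

lemma LSeries_eq_integral_count {f : ℕ → ℂ} (hf : f 0 = 0) (s : ℂ) :
    LSeries f s = ∫ n : ℕ, f n * ((n : ℝ) : ℂ) ^ (-s) ∂Measure.count := by
  rw [integral_count_eq_tsum, LSeries]
  exact tsum_congr fun n => LSeries_term_eq_mul_cpow_neg hf s n

lemma integrable_count_norm_mul_rpow {f : ℕ → ℂ} (hf : f 0 = 0) (hσ : LSeriesSummable f σ) :
    Integrable (fun n : ℕ => ‖f n‖ * (n : ℝ) ^ (-σ)) Measure.count := by
  rw [integrable_count_iff]
  refine hσ.norm.congr fun n => ?_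
  rcases eq_or_ne n 0 with rfl | hn
  · simp [hf]
  · rw [LSeries_term_eq_mul_cpow_neg hf, norm_mul, norm_mul, norm_norm,
      Complex.norm_cpow_eq_rpow_re_of_pos (by positivity), Real.norm_of_nonneg (by positivity),
      Complex.neg_re, Complex.ofReal_re]

lemma integral_LSeries_vonMangoldt_mul (hη : 0 < η) (hσ : 1 < σ) (hx : 0 < x) :
    Integrable (fun t : ℝ =>
      LSeries (fun n => ArithmeticFunction.vonMangoldt n) (σ + t * Complex.I) *
        ((x : ℂ) ^ (σ + t * Complex.I) * tentMellin η (σ + t * Complex.I))) ∧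
    ∫ t : ℝ, LSeries (fun n => ArithmeticFunction.vonMangoldt n) (σ + t * Complex.I) *
        ((x : ℂ) ^ (σ + t * Complex.I) * tentMellin η (σ + t * Complex.I)) =
      2 * π * tentPsi η x := by
  have hzero : (ArithmeticFunction.vonMangoldt 0 : ℂ) = 0 := by simp
  have hpos : ∀ᵐ n : ℕ ∂Measure.count,
      (ArithmeticFunction.vonMangoldt n : ℂ) ≠ 0 → 0 < (n : ℝ) := .of_forall fun n hn =>
    Nat.cast_pos.2 (Nat.pos_of_ne_zero fun h => hn (by simp [h]))
  have hint := integrable_count_norm_mul_rpow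
    (f := fun n => (ArithmeticFunction.vonMangoldt n : ℂ)) hzero
    (ArithmeticFunction.LSeriesSummable_vonMangoldt (s := σ) hσ)
  have hV := verticalIntegrable_tentMellin hη (zero_lt_one.trans hσ)
  have hw : Measurable fun n : ℕ => (ArithmeticFunction.vonMangoldt n : ℂ) :=
    measurable_of_countable _
  have hφ : Measurable fun n : ℕ => (n : ℝ) := measurable_of_countable _
  simp only [LSeries_eq_integral_count (f := fun n => (ArithmeticFunction.vonMangoldt n : ℂ)) hzero]
  refine ⟨integrable_integral_cpow_mul_mellin hw hφ hpos hint hV hx,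
    (integral_integral_cpow_mul_mellin hw hφ hpos hint (mellinConvergent_tent η σ) hV
      (fun u hu => Complex.continuous_ofReal.continuousAt.comp (continuousAt_tent hu.ne')) hx).trans
      ?_⟩
  rw [integral_count_eq_tsum, tentPsi, Complex.ofReal_tsum]
  push_cast
  rfl

lemma integrableOn_Ioi_norm_two_div_sub_one_mul_rpow (hσ : 1 < σ) :
    IntegrableOn (fun y : ℝ => ‖((2 / y - 1 : ℝ) : ℂ)‖ * y ^ (-σ)) (Ioi 1) := by
  refine Integrable.mono' (integrableOn_Ioi_rpow_of_lt (neg_lt_neg hσ) one_pos)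
    (Measurable.aestronglyMeasurable (by fun_prop)) ?_
  refine ae_restrict_of_forall_mem measurableSet_Ioi fun y hy => ?_
  have hy₀ : 0 < y := one_pos.trans hy
  have hle : |2 / y - 1| ≤ 1 := by
    have : 2 / y ≤ 2 := div_le_self two_pos.le (le_of_lt hy)
    rw [abs_le]
    constructor <;> linarith [show 0 < 2 / y by positivity]
  rw [norm_mul, norm_norm, Complex.norm_real, Real.norm_eq_abs, Real.norm_of_nonneg (by positivity)]
  exact mul_le_of_le_one_left (by positivity) hle

lemma integral_Ioi_two_div_sub_one_mul_cpow (hs : 1 < s.re) :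
    ∫ y in Ioi (1 : ℝ), ((2 / y - 1 : ℝ) : ℂ) * (y : ℂ) ^ (-s) = 2 / s - 1 / (s - 1) := by
  have hs₀ : s ≠ 0 := fun h => by norm_num [h] at hs
  have hs₁ : s - 1 ≠ 0 := fun h => by simp [sub_eq_zero.1 h] at hs
  have hsplit : ∀ y ∈ Ioi (1 : ℝ), ((2 / y - 1 : ℝ) : ℂ) * (y : ℂ) ^ (-s) =
      2 * (y : ℂ) ^ (-s - 1) - (y : ℂ) ^ (-s) := fun y hy => by
    have hy₀ : (y : ℂ) ≠ 0 := by exact_mod_cast (one_pos.trans hy).ne'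
    rw [Complex.cpow_sub _ _ hy₀, Complex.cpow_one]
    push_cast
    field_simp
  have hre : (-s - 1).re < -1 := by
    rw [Complex.sub_re, Complex.neg_re, Complex.one_re]
    linarith
  have hre' : (-s).re < -1 := by simpa using hs
  rw [setIntegral_congr_fun measurableSet_Ioi hsplit, integral_sub
    ((integrableOn_Ioi_cpow_of_lt hre one_pos).const_mul 2)
    (integrableOn_Ioi_cpow_of_lt hre' one_pos),
    integral_const_mul, integral_Ioi_cpow_of_lt hre one_pos, integral_Ioi_cpow_of_lt hre' one_pos,
    Complex.ofReal_one, Complex.one_cpow, Complex.one_cpow, sub_add_cancel,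
    show -s + 1 = -(s - 1) by ring]
  field_simp

lemma integral_two_div_sub_one_div_mul (hη : 0 < η) (hσ : 1 < σ) (hx : 0 < x) :
    Integrable (fun t : ℝ => (2 / (σ + t * Complex.I) - 1 / (σ + t * Complex.I - 1)) *
        ((x : ℂ) ^ (σ + t * Complex.I) * tentMellin η (σ + t * Complex.I))) ∧
    ∫ t : ℝ, (2 / (σ + t * Complex.I) - 1 / (σ + t * Complex.I - 1)) *
        ((x : ℂ) ^ (σ + t * Complex.I) * tentMellin η (σ + t * Complex.I)) =
      -(2 * π * tentPsiMain η x) := by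
  have hpos : ∀ᵐ y : ℝ ∂volume.restrict (Ioi 1), ((2 / y - 1 : ℝ) : ℂ) ≠ 0 → 0 < y :=
    ae_restrict_of_forall_mem measurableSet_Ioi fun y hy _ => one_pos.trans hy
  have hw : Measurable fun y : ℝ => ((2 / y - 1 : ℝ) : ℂ) := by fun_prop
  have hint := integrableOn_Ioi_norm_two_div_sub_one_mul_rpow hσ
  have hV := verticalIntegrable_tentMellin hη (zero_lt_one.trans hσ)
  have hre : ∀ t : ℝ, 1 < (σ + t * Complex.I : ℂ).re := fun t => by simpa using hσ
  simp only [← fun t : ℝ => integral_Ioi_two_div_sub_one_mul_cpow (hre t)]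
  refine ⟨integrable_integral_cpow_mul_mellin hw measurable_id hpos hint hV hx,
    (integral_integral_cpow_mul_mellin hw measurable_id hpos hint (mellinConvergent_tent η σ) hV
      (fun u hu => Complex.continuous_ofReal.continuousAt.comp (continuousAt_tent hu.ne')) hx).trans
      ?_⟩
  rw [tentPsiMain, ← mul_neg, ← Complex.ofReal_neg, ← integral_neg, ← integral_complex_ofReal]
  congr 2 with y
  push_cast
  simp only [id_eq]
  ring

lemma IsLogInvZeta.integral_deriv_mul {F : ℂ → ℂ} (hF : IsLogInvZeta F) (hη : 0 < η) (hσ : 1 < σ)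
    (hx : 0 < x) :
    ∫ t : ℝ, deriv F (σ + t * Complex.I) *
        ((x : ℂ) ^ (σ + t * Complex.I) * tentMellin η (σ + t * Complex.I)) =
      ((2 * π * (tentPsi η x - tentPsiMain η x) : ℝ) : ℂ) := by
  obtain ⟨hprimeInt, hprime⟩ := integral_LSeries_vonMangoldt_mul hη hσ hx
  obtain ⟨hmainInt, hmain⟩ := integral_two_div_sub_one_div_mul hη hσ hx
  have hre : ∀ t : ℝ, 1 < (σ + t * Complex.I : ℂ).re := fun t => by simpa using hσ
  simp only [fun t : ℝ => hF.deriv_eq (hre t), add_mul _ (LSeries _ _)]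
  rw [integral_add hmainInt hprimeInt, hmain, hprime]
  push_cast
  ring

end ExplicitFormula

/-! ### The error term -/

section ErrorTerm

variable {F : ℂ → ℂ} {a η x : ℝ} {s : ℂ}

lemma log_norm_two_add_mul_I_le (t : ℝ) :
    log (128 * ‖(2 + t * Complex.I : ℂ)‖) ≤ 32 * (1 + t ^ 2) ^ (1 / 4 : ℝ) := by
  have hpos : 0 < 1 + t ^ 2 := by positivity
  have hnorm : ‖(2 + t * Complex.I : ℂ)‖ = √(2 ^ 2 + t ^ 2) := by
    simpa using Complex.norm_add_mul_I 2 t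
  have hle : ‖(2 + t * Complex.I : ℂ)‖ ≤ 2 * √(1 + t ^ 2) := by
    rw [hnorm, sqrt_le_left (by positivity), mul_pow, sq_sqrt hpos.le]
    nlinarith [sq_nonneg t]
  have hsqrt : √256 = 16 := by rw [show (256 : ℝ) = 16 ^ 2 by norm_num, sqrt_sq (by norm_num)]
  calc log (128 * ‖(2 + t * Complex.I : ℂ)‖) ≤ log (256 * √(1 + t ^ 2)) :=
        log_le_log (by rw [hnorm]; positivity) (by linarith)
    _ ≤ (256 * √(1 + t ^ 2)) ^ (1 / 2 : ℝ) / (1 / 2) :=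
        log_le_rpow_div (by positivity) (by norm_num)
    _ = 32 * (1 + t ^ 2) ^ (1 / 4 : ℝ) := by
        rw [mul_rpow (by norm_num) (by positivity), ← sqrt_eq_rpow, hsqrt, sqrt_eq_rpow,
          ← rpow_mul hpos.le]
        norm_num
        ring

lemma integrable_one_add_sq_rpow : Integrable fun t : ℝ => (1 + t ^ 2) ^ (-(3 / 4) : ℝ) := by
  have := integrable_rpow_neg_one_add_norm_sq (E := ℝ) (μ := volume) (r := 3 / 2) (by norm_num)
  refine this.congr (.of_forall fun t => ?_)
  simp only [Real.norm_eq_abs, sq_abs]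
  norm_num

lemma tendsto_one_add_sq_rpow_cocompact :
    Tendsto (fun t : ℝ => (1 + t ^ 2) ^ (-(3 / 4) : ℝ)) (cocompact ℝ) (𝓝 0) := by
  refine (tendsto_rpow_neg_atTop (by norm_num)).comp
    (tendsto_atTop_add_const_left _ _ ?_)
  exact ((tendsto_pow_atTop two_ne_zero).comp (tendsto_norm_cocompact_atTop (E := ℝ))).congr
    fun t => sq_abs t

namespace IsLogInvZeta

lemma re_le_rpow (hF : IsLogInvZeta F) (ha : 1 / 2 < a) (hs : s.re ∈ Icc a 2) :
    (F s).re ≤ 32 * (1 + 3 / (a - 1 / 2)) * (1 + s.im ^ 2) ^ (1 / 4 : ℝ) := by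
  have hs₀ : 1 / 2 < s.re := ha.trans_le hs.1
  have hw : (2 + s.im * Complex.I : ℂ) ∈ rightHalfPlane (1 / 2) := by
    norm_num [rightHalfPlane]
  calc (F s).re
      ≤ (1 + 2 * (2 - s.re) / (s.re - 1 / 2)) * (F (2 + s.im * Complex.I)).re := by
        simpa using re_le_of_re_pos_of_im_eq hF.differentiableOn (fun z => hF.re_pos) hs₀
          (w := 2 + s.im * Complex.I) (by simpa using hs.2) (by simp)
    _ ≤ (1 + 3 / (a - 1 / 2)) * (32 * (1 + s.im ^ 2) ^ (1 / 4 : ℝ)) := by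
        have := hF.re_pos hw
        have := ha.trans_le hs.1
        gcongr
        · linarith [hs.1]
        · exact hs.1
        · exact (hF.re_le_log (by simp)).trans (log_norm_two_add_mul_I_le _)
    _ = _ := by ring

lemma norm_deriv_mul_le (hF : IsLogInvZeta F) (ha : 1 / 2 < a) (hs : a ≤ s.re) (hη : 0 < η)
    (hx : 0 < x) :
    ‖deriv F s * ((x : ℂ) ^ s * tentMellin η s)‖ ≤
      24 / (a - 1 / 2) * (x * Real.exp η) ^ s.re * ((F s).re * ((1 / η) ^ 2 + s.im ^ 2)⁻¹) := by
  have hs₀ : s ∈ rightHalfPlane (1 / 2) := ha.trans_le hs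
  have hre := hF.re_pos hs₀
  have hderiv : ‖deriv F s‖ ≤ 4 * (F s).re / (a - 1 / 2) :=
    (norm_deriv_le_of_re_pos hF.differentiableOn (fun z => hF.re_pos) hs₀).trans (by gcongr)
  have htent := norm_tentMellin_le hη (s := s) (by linarith)
  rw [norm_mul, norm_mul, Complex.norm_cpow_eq_rpow_re_of_pos hx, mul_rpow hx.le (exp_pos _).le,
    ← Real.exp_mul]
  calc ‖deriv F s‖ * (x ^ s.re * ‖tentMellin η s‖)
      ≤ 4 * (F s).re / (a - 1 / 2) *
          (x ^ s.re * (6 * Real.exp (η * s.re) * ((1 / η) ^ 2 + s.im ^ 2)⁻¹)) := by gcongr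
    _ = _ := by ring

lemma norm_deriv_mul_le_rpow (hF : IsLogInvZeta F) (ha : 1 / 2 < a) (hs : s.re ∈ Icc a 2)
    (hη : 0 < η) (hη₁ : η ≤ 1) (hx : 1 ≤ x) :
    ‖deriv F s * ((x : ℂ) ^ s * tentMellin η s)‖ ≤
      24 / (a - 1 / 2) * (x * Real.exp η) ^ (2 : ℝ) * (32 * (1 + 3 / (a - 1 / 2))) *
        (1 + s.im ^ 2) ^ (-(3 / 4) : ℝ) := by
  have hpos : 0 < 1 + s.im ^ 2 := by positivity
  have : 0 < a - 1 / 2 := by linarith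
  have hre := hF.re_pos (s := s) (ha.trans_le hs.1)
  have hbase : 1 ≤ x * Real.exp η := one_le_mul_of_one_le_of_one_le hx (one_le_exp hη.le)
  have hone : 1 ≤ (1 / η) ^ 2 := one_le_pow₀ (by rwa [le_div_iff₀ hη, one_mul])
  calc _ ≤ 24 / (a - 1 / 2) * (x * Real.exp η) ^ s.re *
          ((F s).re * ((1 / η) ^ 2 + s.im ^ 2)⁻¹) :=
        hF.norm_deriv_mul_le ha hs.1 hη (by linarith)
    _ ≤ 24 / (a - 1 / 2) * (x * Real.exp η) ^ (2 : ℝ) *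
          (32 * (1 + 3 / (a - 1 / 2)) * (1 + s.im ^ 2) ^ (1 / 4 : ℝ) * (1 + s.im ^ 2)⁻¹) := by
        have hre' := hF.re_le_rpow ha hs
        have hexp : (x * Real.exp η) ^ s.re ≤ (x * Real.exp η) ^ (2 : ℝ) :=
          rpow_le_rpow_of_exponent_le hbase hs.2
        gcongr
    _ = _ := by
        rw [← rpow_neg_one (1 + s.im ^ 2), mul_assoc (32 * _), ← rpow_add hpos]
        norm_num
        ring

lemma integral_deriv_mul_eq (hF : IsLogInvZeta F) (ha : 1 / 2 < a) (ha₂ : a ≤ 2) (hη : 0 < η)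
    (hη₁ : η ≤ 1) (hx : 1 ≤ x) :
    ∫ t : ℝ, deriv F (a + t * Complex.I) *
        ((x : ℂ) ^ (a + t * Complex.I) * tentMellin η (a + t * Complex.I)) =
      ∫ t : ℝ, deriv F ((2 : ℝ) + t * Complex.I) *
        ((x : ℂ) ^ ((2 : ℝ) + t * Complex.I) * tentMellin η ((2 : ℝ) + t * Complex.I)) := by
  have hdiff : ∀ s : ℂ, s.re ∈ Icc a 2 →
      DifferentiableAt ℂ (fun s => deriv F s * ((x : ℂ) ^ s * tentMellin η s)) s := fun s hs => by
    have hs₀ : 0 < s.re := by linarith [hs.1]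
    have hderiv := (hF.differentiableOn.deriv (isOpen_rightHalfPlane _)).differentiableAt
      ((isOpen_rightHalfPlane _).mem_nhds (ha.trans_le hs.1))
    have hcpow : DifferentiableAt ℂ (fun s => (x : ℂ) ^ s) s :=
      differentiableAt_id.const_cpow (Or.inl (by exact_mod_cast (one_pos.trans_le hx).ne'))
    exact hderiv.mul (hcpow.mul
      (differentiableAt_tentMellin hη.le fun h => by simp [h] at hs₀))
  refine integral_vertical_eq ha₂ (fun s hs => (hdiff s hs).continuousAt.continuousWithinAt)
    (fun s hs => (hdiff s (Ioo_subset_Icc_self hs)).differentiableWithinAt)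
    (integrable_one_add_sq_rpow.const_mul _) ?_
    fun s hs => hF.norm_deriv_mul_le_rpow ha hs hη hη₁ hx
  simpa using tendsto_one_add_sq_rpow_cocompact.const_mul _

lemma abs_tentPsi_sub_tentPsiMain_le (hF : IsLogInvZeta F) (ha : 1 / 2 < a) (ha₂ : a ≤ 2)
    (hη : 0 < η) (hη₂ : η ≤ 1 / 2) (hx : 1 ≤ x) :
    |tentPsi η x - tentPsiMain η x| ≤
      12 * η * (x * Real.exp η) ^ a / (a - 1 / 2) * log (128 * (a + 1 / η)) := by
  have hx₀ : 0 < x := one_pos.trans_le hx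
  have : 0 < a - 1 / 2 := sub_pos.2 ha
  have hη' : 2 ≤ 1 / η := by rw [le_div_iff₀ hη]; linarith
  obtain ⟨hint, hpoisson⟩ := integral_poisson_le_of_re_nonneg hF.differentiableOn
    (fun s hs => (hF.re_pos hs).le) ha (one_div_pos.2 hη)
  have hlog : (F (a + (1 / η : ℝ))).re ≤ log (128 * (a + 1 / η)) := by
    have hnorm : ‖(a + (1 / η : ℝ) : ℂ)‖ = a + 1 / η := by
      rw [← Complex.ofReal_add, Complex.norm_real, Real.norm_of_nonneg (by linarith)]
    rw [← hnorm]
    exact hF.re_le_log (by rw [Complex.add_re, Complex.ofReal_re, Complex.ofReal_re]; linarith)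
  have hbound : 2 * π * |tentPsi η x - tentPsiMain η x| ≤
      24 / (a - 1 / 2) * (x * Real.exp η) ^ a * (log (128 * (a + 1 / η)) * (π / (1 / η))) := by
    calc 2 * π * |tentPsi η x - tentPsiMain η x|
        = ‖∫ t : ℝ, deriv F (a + t * Complex.I) *
            ((x : ℂ) ^ (a + t * Complex.I) * tentMellin η (a + t * Complex.I))‖ := by
          rw [hF.integral_deriv_mul_eq ha ha₂ hη (by linarith) hx,
            hF.integral_deriv_mul hη one_lt_two hx₀, Complex.norm_real, Real.norm_eq_abs, abs_mul,
            abs_of_pos two_pi_pos]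
      _ ≤ ∫ t : ℝ, 24 / (a - 1 / 2) * (x * Real.exp η) ^ a *
            ((F (a + t * Complex.I)).re * ((1 / η) ^ 2 + t ^ 2)⁻¹) := by
          refine norm_integral_le_of_norm_le (hint.const_mul _) (.of_forall fun t => ?_)
          simpa using hF.norm_deriv_mul_le ha (s := a + t * Complex.I) (by simp) hη hx₀
      _ ≤ 24 / (a - 1 / 2) * (x * Real.exp η) ^ a *
            (log (128 * (a + 1 / η)) * (π / (1 / η))) := by
          rw [integral_const_mul]
          have hlog' := mul_le_mul_of_nonneg_right hlog
            (div_pos pi_pos (one_div_pos.2 hη)).le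
          exact mul_le_mul_of_nonneg_left (hpoisson.trans hlog') (by positivity)
  refine le_of_mul_le_mul_left (hbound.trans_eq ?_) two_pi_pos
  field_simp
  ring

end IsLogInvZeta

end ErrorTerm

/-! ### Primes in short intervals -/

section ShortIntervals

variable {F : ℂ → ℂ} {η x y : ℝ}

lemma tent_div_eq_zero_of_notMem (hx : 0 < x) (hy : 0 < y)
    (h : y ∉ Ioo (x * Real.exp (-η)) (x * Real.exp η)) : tent η (y / x) = 0 :=
  tent_eq_zero_of_notMem (div_pos hy hx) fun hmem =>
    h ⟨(lt_div_iff₀' hx).1 hmem.1, (div_lt_iff₀' hx).1 hmem.2⟩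

lemma integrableOn_mul_tent {g : ℝ → ℝ} (hg : ContinuousOn g (Ioi 0)) (hx : 0 < x) :
    IntegrableOn (fun y => g y * tent η (y / x)) (Ioi 0) := by
  have hlow : 0 < x * Real.exp (-η) := by positivity
  refine IntegrableOn.of_forall_sdiff_eq_zero (s := Icc (x * Real.exp (-η)) (x * Real.exp η))
    (ContinuousOn.integrableOn_Icc fun y hy => ?_) measurableSet_Ioi fun y hy => ?_
  · have hy₀ : 0 < y := hlow.trans_le hy.1
    have htent : ContinuousAt (fun y => tent η (y / x)) y :=
      (continuousAt_tent (div_pos hy₀ hx).ne').comp (f := fun y => y / x) (by fun_prop)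
    exact ((hg.continuousAt (Ioi_mem_nhds hy₀)).mul htent).continuousWithinAt
  · rw [tent_div_eq_zero_of_notMem hx hy.1 fun h => hy.2 (Ioo_subset_Icc_self h), mul_zero]

lemma half_le_tent (hx : 0 < x) (hy : y ∈ Ioc x (x * Real.exp (η / 2))) :
    η / 2 ≤ tent η (y / x) := by
  have hlow : 1 ≤ y / x := (one_le_div hx).2 hy.1.le
  have hup : log (y / x) ≤ η / 2 := by
    rw [log_le_iff_le_exp (by linarith), div_le_iff₀' hx]
    exact hy.2
  rw [tent, abs_of_nonneg (log_nonneg hlow)]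
  exact le_max_of_le_right (by linarith)

lemma le_tentPsiMain (hη : 0 < η) (hx : 4 ≤ x * Real.exp (-η)) :
    x * η ^ 2 / 8 ≤ tentPsiMain η x := by
  have hx₄ : 4 ≤ x := by nlinarith [exp_pos (-η), exp_le_one_iff.2 (neg_nonpos.2 hη.le)]
  have hx₀ : 0 < x := by linarith
  have hle : x ≤ x * Real.exp (η / 2) := le_mul_of_one_le_right hx₀.le (one_le_exp (by linarith))
  have hsub : Ioc x (x * Real.exp (η / 2)) ⊆ Ioi 1 := fun y hy => by
    have := hy.1
    rw [mem_Ioi]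
    linarith
  have hint : IntegrableOn (fun y => (1 - 2 / y) * tent η (y / x)) (Ioi 1) :=
    (integrableOn_mul_tent (continuousOn_const.sub (continuousOn_const.div continuousOn_id
      fun y hy => ne_of_gt hy)) hx₀).mono_set (Ioi_subset_Ioi zero_le_one)
  have hnonneg : ∀ y ∈ Ioi (1 : ℝ), 0 ≤ (1 - 2 / y) * tent η (y / x) := fun y hy => by
    have hy₀ : 0 < y := one_pos.trans hy
    by_cases hmem : y ∈ Ioo (x * Real.exp (-η)) (x * Real.exp η)
    · refine mul_nonneg (sub_nonneg.2 ((div_le_one hy₀).2 ?_)) (tent_nonneg _ _)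
      linarith [hmem.1]
    · rw [tent_div_eq_zero_of_notMem hx₀ hy₀ hmem, mul_zero]
  calc x * η ^ 2 / 8 ≤ (x * Real.exp (η / 2) - x) * (1 / 2 * (η / 2)) := by
        have := mul_le_mul_of_nonneg_left (add_one_le_exp (η / 2)) (mul_pos hx₀ hη).le
        nlinarith
    _ = ∫ y in Ioc x (x * Real.exp (η / 2)), 1 / 2 * (η / 2) := by
        rw [setIntegral_const, measureReal_def, Real.volume_Ioc,
          ENNReal.toReal_ofReal (by linarith), smul_eq_mul]
    _ ≤ ∫ y in Ioc x (x * Real.exp (η / 2)), (1 - 2 / y) * tent η (y / x) := by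
        refine setIntegral_mono_on (integrableOn_const measure_Ioc_lt_top.ne) (hint.mono_set hsub)
          measurableSet_Ioc fun y hy => ?_
        have hy₄ : 4 < y := hx₄.trans_lt hy.1
        have hweight : 2 / y ≤ 1 / 2 := by
          rw [div_le_div_iff₀ (by linarith) two_pos]
          linarith
        exact mul_le_mul (by linarith) (half_le_tent hx₀ hy) (by linarith) (by linarith)
    _ ≤ tentPsiMain η x := setIntegral_mono_set hint
        (ae_restrict_of_forall_mem measurableSet_Ioi hnonneg) hsub.eventuallyLE

lemma tentPsi_eq_sum (hx : 0 < x) :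
    tentPsi η x = ∑ n ∈ Finset.Ioc 0 ⌊x * Real.exp η⌋₊,
      ArithmeticFunction.vonMangoldt n * tent η (n / x) := by
  refine tsum_eq_sum fun n hn => ?_
  rcases n.eq_zero_or_pos with rfl | hpos
  · simp
  rw [tent_div_eq_zero_of_notMem hx (Nat.cast_pos.2 hpos) fun h =>
    hn (Finset.mem_Ioc.2 ⟨hpos, Nat.le_floor h.2.le⟩), mul_zero]

lemma tentPsi_le_of_forall_prime_notMem (hη : 0 ≤ η) (hx : 0 < x)
    (h : ∀ p : ℕ, p.Prime → (p : ℝ) ∉ Ioo (x * Real.exp (-η)) (x * Real.exp η)) :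
    tentPsi η x ≤
      η * (Chebyshev.psi (x * Real.exp η) - Chebyshev.theta (x * Real.exp η)) := by
  rw [tentPsi_eq_sum hx, Chebyshev.psi_sub_theta_eq_sum_not_prime, Finset.mul_sum,
    Finset.sum_filter]
  refine Finset.sum_le_sum fun n _ => ?_
  split_ifs with hprime
  · rw [tent_div_eq_zero_of_notMem hx (Nat.cast_pos.2 hprime.pos) (h n hprime), mul_zero]
  · rw [mul_comm]
    exact mul_le_mul_of_nonneg_right (tent_le hη _) ArithmeticFunction.vonMangoldt_nonneg

lemma mul_exp_rpow_half_add_inv_log_le (hx : Real.exp 2 ≤ x) (hη : 0 ≤ η) (hη₂ : η ≤ 1 / 2) :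
    (x * Real.exp η) ^ (1 / 2 + 1 / log x) ≤ 8 * √x := by
  have hx₀ : 0 < x := (Real.exp_pos _).trans_le hx
  have hlog : 2 ≤ log x := (le_log_iff_exp_le hx₀).2 hx
  have hinv : 1 / log x ≤ 1 / 2 := one_div_le_one_div_of_le two_pos hlog
  have hexp : Real.exp 2 ≤ 8 := by
    rw [show (2 : ℝ) = 1 + 1 by norm_num, Real.exp_add]
    nlinarith [exp_one_lt_d9, exp_pos 1]
  calc (x * Real.exp η) ^ (1 / 2 + 1 / log x)
      = √x * Real.exp (1 + η * (1 / 2 + 1 / log x)) := by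
        rw [mul_rpow hx₀.le (exp_pos _).le, ← Real.exp_mul, rpow_add hx₀, ← sqrt_eq_rpow,
          rpow_def_of_pos hx₀ (1 / log x), mul_one_div_cancel (by linarith), mul_assoc,
          ← Real.exp_add]
    _ ≤ √x * Real.exp 2 := by
        gcongr
        nlinarith
    _ ≤ 8 * √x := by
        rw [mul_comm]
        gcongr

lemma IsLogInvZeta.abs_tentPsi_sub_tentPsiMain_le_sqrt_mul_log_sq (hF : IsLogInvZeta F)
    (hη : 0 < η) (hη₂ : η ≤ 1 / 2) (hηx : 256 ≤ η * x) :
    |tentPsi η x - tentPsiMain η x| ≤ 96 * η * √x * log x ^ 2 := by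
  have hx₅₁₂ : 512 ≤ x := by nlinarith
  have hx₀ : 0 < x := by linarith
  have hx : Real.exp 2 ≤ x := by
    rw [show (2 : ℝ) = 1 + 1 by norm_num, Real.exp_add]
    nlinarith [exp_one_lt_d9, exp_pos 1]
  have hlog : 2 ≤ log x := (le_log_iff_exp_le hx₀).2 hx
  have hinv : 1 / log x ≤ 1 / 2 := one_div_le_one_div_of_le two_pos hlog
  have hinv₀ : 0 < 1 / log x := one_div_pos.2 (by linarith)
  have hη' : 1 ≤ 1 / η := (one_le_div hη).2 (by linarith)
  have harg : 128 * (1 / 2 + 1 / log x + 1 / η) ≤ x := by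
    have : 256 * (1 / η) ≤ x := by rw [mul_one_div, div_le_iff₀' hη]; exact hηx
    linarith
  have hlog₀ : 0 ≤ log (128 * (1 / 2 + 1 / log x + 1 / η)) := log_nonneg (by linarith)
  calc |tentPsi η x - tentPsiMain η x|
      ≤ 12 * η * (x * Real.exp η) ^ (1 / 2 + 1 / log x) / (1 / 2 + 1 / log x - 1 / 2) *
          log (128 * (1 / 2 + 1 / log x + 1 / η)) :=
        hF.abs_tentPsi_sub_tentPsiMain_le (by linarith) (by linarith) hη hη₂ (by linarith)
    _ ≤ 12 * η * (8 * √x) / (1 / log x) * log x := by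
        rw [add_sub_cancel_left]
        gcongr
        exact mul_exp_rpow_half_add_inv_log_le hx hη.le hη₂
    _ = 96 * η * √x * log x ^ 2 := by
        field_simp
        norm_num

lemma sqrt_mul_exp_le (hη₂ : η ≤ 1 / 2) (x : ℝ) : √(x * Real.exp η) ≤ 2 * √x := by
  have hexp : Real.exp η ≤ 2 ^ 2 := by
    have := Real.exp_le_exp.2 (show η ≤ 1 by linarith)
    linarith [exp_one_lt_d9]
  rw [sqrt_mul' x (exp_pos η).le, mul_comm]
  gcongr
  exact sqrt_le_iff.2 ⟨two_pos.le, hexp⟩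

lemma exists_prime_mem_Ioo_mul_exp (hRH : RiemannHypothesis) :
    ∃ B : ℝ, 0 < B ∧ ∀ x η : ℝ, 2 ≤ x → 0 < η → η ≤ 1 / 2 → B * log x ^ 2 < η * √x →
      ∃ p : ℕ, p.Prime ∧ (p : ℝ) ∈ Ioo (x * Real.exp (-η)) (x * Real.exp η) := by
  obtain ⟨F, hF⟩ := exists_isLogInvZeta hRH
  obtain ⟨C, hC⟩ := Chebyshev.psi_sub_theta_le_mul_sqrt
  refine ⟨768 + 16 * |C|, by positivity, fun x η hx hη hη₂ hB => ?_⟩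
  by_contra! hno
  have hx₀ : 0 < x := by linarith
  have hsqrt : 1 ≤ √x := one_le_sqrt.2 (by linarith)
  have hsq : √x * √x = x := mul_self_sqrt hx₀.le
  have hC₀ := abs_nonneg C
  have hηx : 256 ≤ η * x := by
    have hlog : 0.69 < log x := by linarith [log_two_gt_d9, log_le_log two_pos hx]
    have hηsqrt : 256 ≤ η * √x := by nlinarith [mul_nonneg hC₀ (sq_nonneg (log x))]
    nlinarith
  have hx₅₁₂ : 512 ≤ x := by nlinarith
  have hlog : 1 ≤ log x := (le_log_iff_exp_le hx₀).2 (by linarith [exp_one_lt_d9])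
  have hmain : x * η ^ 2 / 8 ≤ tentPsiMain η x :=
    le_tentPsiMain hη (by nlinarith [add_one_le_exp (-η)])
  have herror := hF.abs_tentPsi_sub_tentPsiMain_le_sqrt_mul_log_sq hη hη₂ hηx
  have hprimePowers : tentPsi η x ≤ η * (|C| * (2 * √x)) := by
    refine (tentPsi_le_of_forall_prime_notMem hη.le hx₀ hno).trans ?_
    gcongr
    calc _ ≤ C * √(x * Real.exp η) := hC _
      _ ≤ |C| * (2 * √x) :=
        mul_le_mul (le_abs_self C) (sqrt_mul_exp_le hη₂ x) (sqrt_nonneg _) hC₀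
  have hcompare : η * √x * (η * √x) ≤ η * √x * ((768 + 16 * |C|) * log x ^ 2) := by
    have hlog₂ : |C| ≤ |C| * log x ^ 2 := le_mul_of_one_le_right hC₀ (one_le_pow₀ hlog)
    calc η * √x * (η * √x) = η ^ 2 * (√x * √x) := by ring
      _ = 8 * (x * η ^ 2 / 8) := by rw [hsq]; ring
      _ ≤ 8 * (η * (|C| * (2 * √x)) + 96 * η * √x * log x ^ 2) := by
        linarith [neg_le_of_abs_le herror]
      _ = η * √x * (768 * log x ^ 2 + 16 * |C|) := by ring
      _ ≤ η * √x * ((768 + 16 * |C|) * log x ^ 2) := by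
        gcongr
        linarith
  exact hB.not_ge (le_of_mul_le_mul_left hcompare (by positivity))

lemma mul_exp_two_mul_le (hx : 0 ≤ x) (hη : 0 ≤ η) (hη₂ : η ≤ 1 / 2) :
    x * Real.exp (2 * η) ≤ x + 6 * (η * x) := by
  have hinv : Real.exp (2 * η) * Real.exp (-(2 * η)) = 1 := by
    rw [← Real.exp_add, add_neg_cancel, Real.exp_zero]
  have hexp : Real.exp (2 * η) ≤ 3 := by
    have := Real.exp_le_exp.2 (show 2 * η ≤ 1 by linarith)
    linarith [exp_one_lt_d9]
  have hbound : Real.exp (2 * η) ≤ 1 + 6 * η := by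
    nlinarith [add_one_le_exp (-(2 * η)), exp_pos (2 * η)]
  nlinarith [mul_le_mul_of_nonneg_left hbound hx]

lemma exists_prime_mem_Ioc_add_mul (hRH : RiemannHypothesis) :
    ∃ B : ℝ, 0 < B ∧ ∀ x η : ℝ, 2 ≤ x → 0 < η → η ≤ 1 / 2 → B * log x ^ 2 ≤ η * √x →
      ∃ p : ℕ, p.Prime ∧ (p : ℝ) ∈ Ioc x (x + 6 * (η * x)) := by
  obtain ⟨B, hB, hprime⟩ := exists_prime_mem_Ioo_mul_exp hRH
  refine ⟨5 * B, by positivity, fun x η hx hη hη₂ h => ?_⟩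
  have hx₀ : 0 < x := by linarith
  have hlog : 0.69 < log x := by linarith [log_two_gt_d9, log_le_log two_pos hx]
  have hle : x ≤ x * Real.exp η := le_mul_of_one_le_right hx₀.le (one_le_exp hη.le)
  have hcond : B * log (x * Real.exp η) ^ 2 < η * √(x * Real.exp η) := by
    calc B * log (x * Real.exp η) ^ 2 = B * (log x + η) ^ 2 := by
          rw [log_mul hx₀.ne' (exp_pos _).ne', log_exp]
      _ < B * (5 * log x ^ 2) := by
          gcongr
          nlinarith
      _ ≤ η * √x := by linarith
      _ ≤ η * √(x * Real.exp η) := by gcongr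
  obtain ⟨p, hp, hlow, hup⟩ := hprime (x * Real.exp η) η (hx.trans hle) hη hη₂ hcond
  rw [mul_assoc, ← Real.exp_add, add_neg_cancel, Real.exp_zero, mul_one] at hlow
  rw [mul_assoc, ← Real.exp_add, ← two_mul] at hup
  exact ⟨p, hp, hlow, hup.le.trans (mul_exp_two_mul_le hx₀.le hη.le hη₂)⟩

lemma exists_prime_mem_Ioc_add_self (hx : 1 ≤ x) : ∃ p : ℕ, p.Prime ∧ (p : ℝ) ∈ Ioc x (x + x) := by
  obtain ⟨p, hp, hlow, hup⟩ :=
    Nat.exists_prime_lt_and_le_two_mul ⌊x⌋₊ (Nat.floor_pos.2 hx).ne'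
  refine ⟨p, hp, (Nat.floor_lt (by linarith)).1 hlow, ?_⟩
  calc (p : ℝ) ≤ 2 * ⌊x⌋₊ := by exact_mod_cast hup
    _ ≤ x + x := by linarith [Nat.floor_le (show 0 ≤ x by linarith)]

lemma exists_prime_mem_Ioc_add_sqrt_mul_log_sq (hRH : RiemannHypothesis) :
    ∃ C : ℝ, 0 < C ∧ ∀ x : ℝ, 2 ≤ x →
      ∃ p : ℕ, p.Prime ∧ (p : ℝ) ∈ Ioc x (x + C * √x * log x ^ 2) := by
  obtain ⟨B, hB, hprime⟩ := exists_prime_mem_Ioc_add_mul hRH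
  refine ⟨6 * B, by positivity, fun x hx => ?_⟩
  have hsqrt : 0 < √x := sqrt_pos.2 (by linarith)
  have hlog : 0 < log x := log_pos (by linarith)
  have hsq : √x * √x = x := mul_self_sqrt (by linarith)
  rcases le_or_gt (B * log x ^ 2 / √x) (1 / 2) with hη₂ | hη₂
  · obtain ⟨p, hp, hlow, hup⟩ := hprime x (B * log x ^ 2 / √x) hx (by positivity) hη₂
      (div_mul_cancel₀ _ hsqrt.ne').ge
    refine ⟨p, hp, hlow, hup.trans_eq ?_⟩
    calc x + 6 * (B * log x ^ 2 / √x * x)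
        = x + 6 * (B * log x ^ 2 / √x * (√x * √x)) := by rw [hsq]
      _ = x + 6 * B * √x * log x ^ 2 := by field_simp
  · obtain ⟨p, hp, hlow, hup⟩ := exists_prime_mem_Ioc_add_self (show 1 ≤ x by linarith)
    refine ⟨p, hp, hlow, hup.trans (add_le_add_right ?_ x)⟩
    rw [lt_div_iff₀ hsqrt] at hη₂
    calc x ≤ 2 * (B * log x ^ 2) * √x := by nlinarith
      _ ≤ 6 * B * √x * log x ^ 2 := by nlinarith [mul_pos (mul_pos hB hsqrt) (pow_pos hlog 2)]

end ShortIntervals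

/-- Assuming RH, `p_{n+1} - p_n ≪ p_n^{1/2} (log p_n)²`, where `p_n` is the `n`-th prime
(here indexed from `0`, so `Nat.nth Nat.Prime 0 = 2` is the first prime). -/
theorem prime_gap_bound_RH (hRH : RiemannHypothesis) :
    ∃ C : ℝ, 0 < C ∧ ∀ n : ℕ,
      ((Nat.nth Nat.Prime (n + 1) : ℝ) - Nat.nth Nat.Prime n)
        ≤ C * (Nat.nth Nat.Prime n : ℝ) ^ ((1 : ℝ) / 2) *
            Real.log (Nat.nth Nat.Prime n) ^ 2 := by
  obtain ⟨C, hC, hprime⟩ := exists_prime_mem_Ioc_add_sqrt_mul_log_sq hRH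
  refine ⟨C, hC, fun n => ?_⟩
  obtain ⟨q, hq, hlow, hup⟩ := hprime (Nat.nth Nat.Prime n)
    (by exact_mod_cast (Nat.prime_nth_prime n).two_le)
  have hnext : Nat.nth Nat.Prime (n + 1) ≤ q := by
    by_contra! hlt
    exact (Nat.le_nth_of_lt_nth_succ hlt hq).not_gt (Nat.cast_lt.1 hlow)
  have hnext' : (Nat.nth Nat.Prime (n + 1) : ℝ) ≤ q := by exact_mod_cast hnext
  rw [← sqrt_eq_rpow]
  linarith
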